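/- arXiv:1607.05595 — 4 statements merged into one kernel-verified Lean document; each statement's English description precedes it below -/
import Mathlib

section
/- There exists a constant C > 0 such that for every prime q ≥ 2: Σ_{a=1}^{q} |M(a,q)| ≤ C·q·log q. -/
open Complex Real Finset

open scoped Classical in
/-- `M(a,q)`: the twisted second moment over primitive (= nontrivial, for prime `q`)
characters mod `q`. -/
noncomputable def Mtw (a : ℤ) (q : ℕ) [NeZero q] : ℂ :=
  (Real.sqrt q / (Nat.totient q : ℝ)) *
    ∑ χ : DirichletCharacter ℂ q, if χ = 1 then 0 else
      (‖χ.LFunction (1/2)‖^2 : ℂ) * χ (a : ZMod q)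

section Helpers
open MeasureTheory Set
open HurwitzZeta

lemma conv_aux (k : ℝ → ℂ) (hk : Integrable k) (ε : ℂ) (hε : ‖ε‖ = 1)
    (h : ∀ x, k (-x) = ε * (starRingEnd ℂ) (k x)) :
    IntegrableOn (fun s : ℝ => ∫ x : ℝ, k x * (starRingEnd ℂ) (k (s - x))) (Set.Ioi 0) ∧
    ((‖∫ x, k x‖ : ℂ) ^ 2 : ℂ) =
      2 * ∫ s in Set.Ioi (0:ℝ), ∫ x : ℝ, k x * (starRingEnd ℂ) (k (s - x)) := by
  set c : ℝ → ℂ := fun s : ℝ => ∫ x : ℝ, k x * (starRingEnd ℂ) (k (s - x)) with hc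
  have hk' : Integrable (fun x => (starRingEnd ℂ) (k x)) := by
    exact (Complex.conjLIE.toContinuousLinearEquiv.toContinuousLinearMap.integrable_comp hk)
  have e1 : (MeasureTheory.convolution k (fun x => (starRingEnd ℂ) (k x))
      (ContinuousLinearMap.mul ℝ ℂ) volume) = c := by
    ext s
    simp [MeasureTheory.convolution, hc]
  have hci : Integrable c := by
    rw [← e1]
    exact hk.integrable_convolution _ hk'
  have hIntg : ∫ s, c s = (∫ x, k x) * (starRingEnd ℂ) (∫ x, k x) := by
    rw [← e1, integral_convolution _ hk hk']
    simp [integral_conj]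
  have hsym : ∀ s, c (-s) = c s := by
    intro s
    calc c (-s) = ∫ x : ℝ, k (-x) * (starRingEnd ℂ) (k (-s - (-x))) := by
          simp only [hc]
          rw [← integral_neg_eq_self]
      _ = ∫ x : ℝ, k (s - x) * (starRingEnd ℂ) (k (s - (s - x))) := by
          congr 1; ext x
          have : -s - (-x) = -(s - x) := by ring
          rw [this, h, h, sub_sub_cancel]
          have hh : ε * (starRingEnd ℂ) ε = 1 := by
            rw [Complex.mul_conj, Complex.normSq_eq_norm_sq, hε]; simp
          simp only [map_mul, Complex.conj_conj]
          linear_combination (starRingEnd ℂ (k x)) * k (s - x) * hh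
      _ = c s := by
          simp only [hc]
          exact integral_sub_left_eq_self (fun x => k x * (starRingEnd ℂ) (k (s - x))) volume s
  refine ⟨hci.integrableOn, ?_⟩
  have : ((‖∫ x, k x‖ : ℂ) ^ 2 : ℂ) = ∫ s, c s := by
    rw [hIntg, Complex.mul_conj, Complex.normSq_eq_norm_sq]; push_cast; rfl
  rw [this, ← intervalIntegral.integral_Iic_add_Ioi (b := 0) hci.integrableOn hci.integrableOn]
  have h2 : ∫ s in Set.Iic (0:ℝ), c s = ∫ s in Set.Ioi (0:ℝ), c s := by
    have := integral_comp_neg_Ioi (0:ℝ) c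
    simp only [neg_zero, hsym] at this
    exact this.symm
  rw [h2]; ring

lemma int_abs {f : ℝ → ℝ} (hf : IntegrableOn f (Set.Ioi 0)) : Integrable (fun x => f |x|) := by
  have h1 : IntegrableOn (fun x => f |x|) (Set.Ioi 0) :=
    IntegrableOn.congr_fun hf (fun x hx => by rw [abs_of_pos hx]) measurableSet_Ioi
  have h2 : IntegrableOn (fun x => f |x|) (Set.Iic 0) := by
    rw [← integrableOn_Ici_iff_integrableOn_Ioi] at h1
    have := h1.comp_neg
    simpa using this
  rw [← integrableOn_univ, ← Set.Iic_union_Ioi (a := (0:ℝ))]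
  exact h2.union h1

lemma w_bound (Q : ℝ) (hQ : 1 ≤ Q) :
    Integrable (fun x : ℝ => rexp (-(rexp |x| / Q))) ∧
    ∫ x : ℝ, rexp (-(rexp |x| / Q)) ≤ 2 * (Real.log Q + 1) := by
  have hQ0 : 0 < Q := by linarith
  have hl : 0 ≤ Real.log Q := Real.log_nonneg hQ
  have hb : ∀ x : ℝ, rexp (-(rexp |x| / Q)) ≤ rexp (-(|x| - Real.log Q)) := by
    intro x
    apply Real.exp_le_exp.mpr
    have h1 : rexp |x| / Q = rexp (|x| - Real.log Q) := by
      rw [Real.exp_sub, Real.exp_log hQ0]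
    rw [h1]
    have := Real.add_one_le_exp (|x| - Real.log Q)
    linarith
  have hcont : Continuous (fun x : ℝ => rexp (-(rexp |x| / Q))) := by fun_prop
  have hexpI : IntegrableOn (fun x : ℝ => rexp (-(x - Real.log Q))) (Set.Ioi (0:ℝ)) := by
    have := (integrableOn_exp_neg_Ioi (0:ℝ)).const_mul Q
    refine IntegrableOn.congr_fun this (fun x hx => ?_) measurableSet_Ioi
    rw [neg_sub, Real.exp_sub, Real.exp_log hQ0, Real.exp_neg, div_eq_mul_inv]
  have hI0 : IntegrableOn (fun x : ℝ => rexp (-(rexp x / Q))) (Set.Ioi (0:ℝ)) := by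
    refine Integrable.mono' hexpI (by fun_prop) ?_
    filter_upwards [ae_restrict_mem measurableSet_Ioi] with x hx
    have := hb x
    rw [abs_of_pos hx] at this
    simpa [abs_of_pos (Real.exp_pos _)] using this
  have hI : Integrable (fun x : ℝ => rexp (-(rexp |x| / Q))) := 
    int_abs (f := fun x : ℝ => rexp (-(rexp x / Q))) hI0
  refine ⟨hI, ?_⟩
  rw [integral_comp_abs (f := fun x : ℝ => rexp (-(rexp x / Q)))]
  have hsplit : Set.Ioi (0:ℝ) = Set.Ioc 0 (Real.log Q) ∪ Set.Ioi (Real.log Q) :=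
    (Set.Ioc_union_Ioi_eq_Ioi hl).symm
  have hA : ∫ x in Set.Ioc 0 (Real.log Q), rexp (-(rexp x / Q)) ≤ Real.log Q := by
    have : ∫ x in Set.Ioc 0 (Real.log Q), rexp (-(rexp x / Q)) ≤
        ∫ x in Set.Ioc 0 (Real.log Q), (1:ℝ) := by
      apply integral_mono_of_nonneg
      · exact Filter.Eventually.of_forall fun x => (Real.exp_pos _).le
      · exact integrableOn_const (by simp)
      · refine Filter.Eventually.of_forall fun x => ?_
        simp only
        rw [Real.exp_le_one_iff]
        have := Real.exp_pos x
        have : 0 ≤ rexp x / Q := by positivity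
        linarith
    simpa [hl] using this
  have hB : ∫ x in Set.Ioi (Real.log Q), rexp (-(rexp x / Q)) ≤ 1 := by
    have h1 : ∫ x in Set.Ioi (Real.log Q), rexp (-(rexp x / Q)) ≤
        ∫ x in Set.Ioi (Real.log Q), Q * rexp (-x) := by
      apply integral_mono_of_nonneg
      · exact Filter.Eventually.of_forall fun x => (Real.exp_pos _).le
      · exact (integrableOn_exp_neg_Ioi _).const_mul Q
      · filter_upwards [ae_restrict_mem measurableSet_Ioi] with x hx
        have h3 := hb x
        rw [abs_of_pos (lt_of_le_of_lt hl hx)] at h3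
        refine h3.trans (le_of_eq ?_)
        rw [neg_sub, Real.exp_sub, Real.exp_log hQ0, Real.exp_neg]; rfl
    refine h1.trans (le_of_eq ?_)
    rw [integral_const_mul, integral_exp_neg_Ioi, Real.exp_neg, Real.exp_log hQ0]
    field_simp
  rw [hsplit, setIntegral_union (Set.Ioc_disjoint_Ioi le_rfl) measurableSet_Ioi
    (hI0.mono_set (by rw [hsplit]; exact Set.subset_union_left))
    (hI0.mono_set (by rw [hsplit]; exact Set.subset_union_right))]
  linarith

lemma fin_bound (q : ℕ) [Fact q.Prime] (u : ZMod q → ℂ) (hu : ∀ a, ‖u a‖ ≤ 1)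
    (f g : ZMod q → ℂ) :
    ‖∑ χ ∈ (Finset.univ.erase (1 : DirichletCharacter ℂ q)), (∑ a, u a * χ a) *
      ((∑ b, χ b * f b) * (starRingEnd ℂ) (∑ c, χ c * g c))‖ ≤
      2 * q * ((∑ b ∈ Finset.univ.erase 0, ‖f b‖) * (∑ c ∈ Finset.univ.erase 0, ‖g c‖)) := by
  classical
  set T : ZMod q → ZMod q → ZMod q → ℂ := fun a b c =>
    ∑ χ ∈ (Finset.univ.erase (1 : DirichletCharacter ℂ q)), χ a * χ b * (starRingEnd ℂ) (χ c) with hT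
  have hT0 : ∀ a b c, b = 0 ∨ c = 0 → T a b c = 0 := by
    rintro a b c (rfl | rfl) <;> simp [hT, MulChar.map_zero]
  have hTb : ∀ a b c, c ≠ 0 → ‖T a b c‖ ≤ (if c = a * b then (q:ℝ) else 0) + 1 := by
    intro a b c hc
    have hcu : IsUnit c := isUnit_iff_ne_zero.mpr hc
    have h1 := DirichletCharacter.sum_char_inv_mul_char_eq ℂ hcu (a * b)
    rw [← Finset.add_sum_erase _ _ (Finset.mem_univ (1 : DirichletCharacter ℂ q))] at h1
    have h2 : T a b c = ∑ χ ∈ (Finset.univ.erase (1 : DirichletCharacter ℂ q)), χ c⁻¹ * χ (a * b) := by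
      refine Finset.sum_congr rfl fun χ _ => ?_
      have h3 : (starRingEnd ℂ) (χ c) = χ c⁻¹ :=
        (MulChar.star_apply' χ c).trans (MulChar.inv_apply' χ c)
      rw [map_mul, h3]; ring
    rw [h2, eq_sub_iff_add_eq'.mpr h1]
    refine (norm_sub_le _ _).trans (add_le_add ?_ ?_)
    · split_ifs
      · simp only [Complex.norm_natCast]
        exact_mod_cast Nat.totient_le q
      · simp
    · rw [norm_mul]
      exact mul_le_one₀ (DirichletCharacter.norm_le_one _ _) (norm_nonneg _)
        (DirichletCharacter.norm_le_one _ _)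
  have hexp : ∑ χ ∈ (Finset.univ.erase (1 : DirichletCharacter ℂ q)), (∑ a, u a * χ a) *
      ((∑ b, χ b * f b) * (starRingEnd ℂ) (∑ c, χ c * g c)) =
      ∑ b, ∑ c, ∑ a, f b * (starRingEnd ℂ) (g c) * (u a * T a b c) := by
    calc _ = ∑ χ ∈ (Finset.univ.erase (1 : DirichletCharacter ℂ q)), ∑ b, ∑ c, ∑ a,
          f b * (starRingEnd ℂ) (g c) * (u a * (χ a * χ b * (starRingEnd ℂ) (χ c))) := by
          refine Finset.sum_congr rfl fun χ _ => ?_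
          rw [map_sum, Finset.sum_mul_sum, Finset.mul_sum]
          refine Finset.sum_congr rfl fun b _ => ?_
          rw [Finset.mul_sum]
          refine Finset.sum_congr rfl fun c _ => ?_
          rw [Finset.sum_mul]
          refine Finset.sum_congr rfl fun a _ => ?_
          rw [map_mul]; ring
      _ = _ := by
          rw [Finset.sum_comm]
          refine Finset.sum_congr rfl fun b _ => ?_
          rw [Finset.sum_comm]
          refine Finset.sum_congr rfl fun c _ => ?_
          rw [Finset.sum_comm]
          refine Finset.sum_congr rfl fun a _ => ?_
          simp only [hT, Finset.mul_sum]
  have hTsum : ∀ b c, b ≠ 0 → c ≠ 0 → ‖∑ a, u a * T a b c‖ ≤ 2 * q := by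
    intro b c hb hc
    calc ‖∑ a, u a * T a b c‖ ≤ ∑ a, ‖u a * T a b c‖ := norm_sum_le _ _
      _ ≤ ∑ a, ((if c = a * b then (q:ℝ) else 0) + 1) := by
          refine Finset.sum_le_sum fun a _ => ?_
          rw [norm_mul]
          calc _ ≤ 1 * ‖T a b c‖ := by gcongr; exact hu a
            _ ≤ _ := by rw [one_mul]; exact hTb a b c hc
      _ = 2 * q := by
          have : ∀ a, (c = a * b) ↔ (a = c * b⁻¹) := by
            intro a; constructor
            · rintro rfl; field_simp
            · rintro rfl; field_simp
          simp only [this, Finset.sum_add_distrib]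
          simp [ZMod.card]; ring
  rw [hexp]
  have hz : ∑ b, ∑ c, ∑ a, f b * (starRingEnd ℂ) (g c) * (u a * T a b c) =
      ∑ b ∈ Finset.univ.erase 0, ∑ c ∈ Finset.univ.erase 0, 
        f b * (starRingEnd ℂ) (g c) * ∑ a, (u a * T a b c) := by
    simp only [← Finset.mul_sum]
    rw [← Finset.add_sum_erase _ _ (Finset.mem_univ (0 : ZMod q))]
    rw [Finset.sum_eq_zero (s := Finset.univ), zero_add]
    · refine Finset.sum_congr rfl fun b _ => ?_
      rw [← Finset.add_sum_erase _ _ (Finset.mem_univ (0 : ZMod q))]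
      simp [hT0 _ b 0 (Or.inr rfl)]
    · intro c _
      simp [hT0 _ 0 c (Or.inl rfl)]
  rw [hz, Finset.sum_mul_sum, Finset.mul_sum]
  refine (norm_sum_le _ _).trans (Finset.sum_le_sum fun b hb => ?_)
  rw [Finset.mul_sum]
  refine (norm_sum_le _ _).trans (Finset.sum_le_sum fun c hc => ?_)
  rw [norm_mul, norm_mul, RCLike.norm_conj, mul_comm]
  have := hTsum b c (Finset.ne_of_mem_erase hb) (Finset.ne_of_mem_erase hc)
  gcongr


/-- Core estimate. -/
lemma core (q : ℕ) [Fact q.Prime] (u : ZMod q → ℂ) (hu : ∀ a, ‖u a‖ ≤ 1)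
    (e : ZMod q → ℝ → ℂ) (he : ∀ b, Continuous (e b)) (A : ℝ) (hA : 0 ≤ A)
    (hb : ∀ x, ∑ b ∈ Finset.univ.erase 0, ‖e b x‖ ≤ A * (rexp (-x / 4) * rexp (-(rexp x / q))))
    (hfe : ∀ χ : DirichletCharacter ℂ q, χ ≠ 1 → ∃ ε : ℂ, ‖ε‖ = 1 ∧
      ∀ x, ∑ b, χ b * e b (-x) = ε * (starRingEnd ℂ) (∑ b, χ b * e b x)) :
    ‖∑ χ ∈ (Finset.univ.erase (1 : DirichletCharacter ℂ q)), (∑ a, u a * χ a) *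
      (‖∫ x, ∑ b, χ b * e b x‖ : ℂ) ^ 2‖ ≤ 32 * q * A ^ 2 * (Real.log q + 1) := by
  classical
  have hq1 : (1:ℝ) ≤ q := by exact_mod_cast (Fact.out : q.Prime).one_le
  have hq0 : (0:ℝ) < q := by linarith
  set k : DirichletCharacter ℂ q → ℝ → ℂ := fun χ x => ∑ b, χ b * e b x with hk
  have hkc : ∀ χ, Continuous (k χ) := fun χ => by
    simp only [hk]; fun_prop
  have hkb : ∀ χ x, ‖k χ x‖ ≤ A * (rexp (-x / 4) * rexp (-(rexp x / q))) := by
    intro χ x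
    refine le_trans ?_ (hb x)
    simp only [hk]
    rw [← Finset.add_sum_erase _ _ (Finset.mem_univ (0 : ZMod q))]
    rw [MulChar.map_zero, zero_mul, zero_add]
    refine (norm_sum_le _ _).trans (Finset.sum_le_sum fun b _ => ?_)
    rw [norm_mul]
    exact mul_le_of_le_one_left (norm_nonneg _) (DirichletCharacter.norm_le_one _ _)
  have hkb2 : ∀ χ, χ ≠ 1 → ∀ x, ‖k χ x‖ ≤ A * rexp (-(1/4 * |x|)) := by
    intro χ hχ x
    have h0 : ∀ y : ℝ, 0 ≤ y → ‖k χ y‖ ≤ A * rexp (-(1/4 * y)) := by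
      intro y hy
      refine (hkb χ y).trans ?_
      gcongr
      have : rexp (-(rexp y / q)) ≤ 1 := by
        rw [Real.exp_le_one_iff]
        have : 0 ≤ rexp y / q := by positivity
        linarith
      calc _ ≤ rexp (-y / 4) * 1 := by gcongr
        _ = _ := by rw [mul_one]; congr 1; ring
    rcases le_total 0 x with h | h
    · rw [abs_of_nonneg h]; exact h0 x h
    · rw [abs_of_nonpos h]
      obtain ⟨ε, hε, hf⟩ := hfe χ hχ
      have : ‖k χ x‖ = ‖k χ (-x)‖ := by
        have h2 := hf x
        change k χ (-x) = ε * (starRingEnd ℂ) (k χ x) at h2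
        rw [h2, norm_mul, hε, one_mul, RCLike.norm_conj]
      rw [this]; exact h0 (-x) (by linarith)
  have hki : ∀ χ, χ ≠ 1 → Integrable (k χ) := by
    intro χ hχ
    have h1 : Integrable (fun x : ℝ => A * rexp (-(1/4 * |x|))) := by
      apply Integrable.const_mul
      apply int_abs (f := fun x => rexp (-(1/4 * x)))
      have := exp_neg_integrableOn_Ioi (0:ℝ) (b := 1/4) (by norm_num)
      simpa using this
    exact h1.mono' (hkc χ).aestronglyMeasurable (Filter.Eventually.of_forall (hkb2 χ hχ))
  obtain ⟨hwI, hw⟩ := w_bound q hq1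
  -- the key pointwise bound
  set B : ℝ → ℝ → ℝ := fun s x => 2 * q * (A ^ 2) * rexp (-(1/4 * s)) * rexp (-(rexp |x| / q)) with hB
  have hEE : ∀ s x : ℝ, 0 < s → 
      (rexp (-x / 4) * rexp (-(rexp x / q))) * (rexp (-(s-x) / 4) * rexp (-(rexp (s-x) / q))) ≤
      rexp (-(1/4 * s)) * rexp (-(rexp |x| / q)) := by
    intro s x hs
    rw [← Real.exp_add, ← Real.exp_add, ← Real.exp_add, ← Real.exp_add]
    apply Real.exp_le_exp.mpr
    have : rexp |x| ≤ rexp x + rexp (s - x) := by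
      rcases le_total 0 x with h | h
      · rw [abs_of_nonneg h]; linarith [Real.exp_pos (s - x)]
      · rw [abs_of_nonpos h]
        have : rexp (-x) ≤ rexp (s-x) := Real.exp_le_exp.mpr (by linarith)
        linarith [Real.exp_pos x]
    have : rexp |x| / q ≤ rexp x / q + rexp (s - x) / q := by
      rw [← add_div]; gcongr
    linarith
  have hpt : ∀ s x : ℝ, 0 < s → 
      ‖∑ χ ∈ (Finset.univ.erase (1 : DirichletCharacter ℂ q)), (∑ a, u a * χ a) *
        (k χ x * (starRingEnd ℂ) (k χ (s - x)))‖ ≤ B s x := by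
    intro s x hs
    refine (fin_bound q u hu (fun b => e b x) (fun b => e b (s-x))).trans ?_
    have h1 := hb x
    have h2 := hb (s-x)
    calc _ ≤ 2 * q * ((A * (rexp (-x / 4) * rexp (-(rexp x / q)))) *
          (A * (rexp (-(s-x) / 4) * rexp (-(rexp (s-x) / q))))) := by
          gcongr
      _ = 2 * q * A ^ 2 * ((rexp (-x / 4) * rexp (-(rexp x / q))) *
          (rexp (-(s-x) / 4) * rexp (-(rexp (s-x) / q)))) := by ring
      _ ≤ 2 * q * A ^ 2 * (rexp (-(1/4 * s)) * rexp (-(rexp |x| / q))) := by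
          gcongr 2 * q * A ^ 2 * ?_
          exact hEE s x hs
      _ = B s x := by simp only [hB]; ring
  have hprodI : ∀ χ, χ ≠ 1 → ∀ s, Integrable (fun x => k χ x * (starRingEnd ℂ) (k χ (s - x))) := by
    intro χ hχ s
    refine (hki χ hχ).mul_bdd (c := A) ?_ ?_
    · exact (Complex.continuous_conj.comp ((hkc χ).comp (by fun_prop))).aestronglyMeasurable
    · refine Filter.Eventually.of_forall fun x => ?_
      rw [RCLike.norm_conj]
      refine (hkb2 χ hχ _).trans ?_
      apply mul_le_of_le_one_right hA
      rw [Real.exp_le_one_iff]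
      have := abs_nonneg (s-x); linarith
  have hconv : ∀ χ : DirichletCharacter ℂ q, χ ≠ 1 → _ := fun χ hχ =>
    (show _ ∧ _ from conv_aux (k χ) (hki χ hχ) _ (hfe χ hχ).choose_spec.1 (hfe χ hχ).choose_spec.2)
  have hmain : ∑ χ ∈ (Finset.univ.erase (1 : DirichletCharacter ℂ q)), (∑ a, u a * χ a) *
      (‖∫ x, k χ x‖ : ℂ) ^ 2 = 2 * ∫ s in Set.Ioi (0:ℝ), ∫ x,
        ∑ χ ∈ (Finset.univ.erase (1 : DirichletCharacter ℂ q)), (∑ a, u a * χ a) *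
        (k χ x * (starRingEnd ℂ) (k χ (s - x))) := by
    have h1 : ∀ s : ℝ, ∫ x, ∑ χ ∈ (Finset.univ.erase (1 : DirichletCharacter ℂ q)), (∑ a, u a * χ a) *
        (k χ x * (starRingEnd ℂ) (k χ (s - x))) = 
        ∑ χ ∈ (Finset.univ.erase (1 : DirichletCharacter ℂ q)), (∑ a, u a * χ a) *
        ∫ x, (k χ x * (starRingEnd ℂ) (k χ (s - x))) := by
      intro s
      rw [integral_finsetSum]
      · refine Finset.sum_congr rfl fun χ _ => ?_
        rw [integral_const_mul]
      · intro χ hχ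
        exact (hprodI χ (Finset.ne_of_mem_erase hχ) s).const_mul _
    simp only [h1]
    rw [integral_finsetSum]
    · rw [Finset.mul_sum]
      refine Finset.sum_congr rfl fun χ hχ => ?_
      rw [integral_const_mul, (hconv χ (Finset.ne_of_mem_erase hχ)).2]
      ring
    · intro χ hχ
      exact (hconv χ (Finset.ne_of_mem_erase hχ)).1.const_mul _
  have hBx : ∀ s, ∫ x, B s x ≤ 2 * q * (A ^ 2) * rexp (-(1/4 * s)) * (2 * (Real.log q + 1)) := by
    intro s
    simp only [hB]
    rw [integral_const_mul]
    gcongr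
  rw [hmain, norm_mul]
  have hfin : ‖∫ s in Set.Ioi (0:ℝ), ∫ x,
        ∑ χ ∈ (Finset.univ.erase (1 : DirichletCharacter ℂ q)), (∑ a, u a * χ a) *
        (k χ x * (starRingEnd ℂ) (k χ (s - x)))‖ ≤ 
        ∫ s in Set.Ioi (0:ℝ), 2 * q * (A ^ 2) * rexp (-(1/4 * s)) * (2 * (Real.log q + 1)) := by
    apply norm_integral_le_of_norm_le
    · have := (exp_neg_integrableOn_Ioi (0:ℝ) (b := 1/4) (by norm_num))
      have h2 := (Integrable.const_mul this (2 * q * A^2)).mul_const (2 * (Real.log q + 1))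
      simpa using h2
    · filter_upwards [ae_restrict_mem measurableSet_Ioi] with s hs
      refine le_trans ?_ (hBx s)
      apply norm_integral_le_of_norm_le
      · exact hwI.const_mul _
      · exact Filter.Eventually.of_forall fun x => hpt s x hs
  have hval : ∫ s in Set.Ioi (0:ℝ), 2 * q * (A ^ 2) * rexp (-(1/4 * s)) * (2 * (Real.log q + 1)) =
      16 * q * A ^ 2 * (Real.log q + 1) := by
    rw [integral_mul_const, integral_const_mul]
    have : ∫ s in Set.Ioi (0:ℝ), rexp (-(1/4 * s)) = 4 := by
      have := integral_exp_mul_Ioi (a := -(1/4 : ℝ)) (by norm_num) 0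
      simp only [neg_mul] at this
      rw [this]; norm_num
    rw [this]; ring
  rw [hval] at hfin
  simp only [Complex.norm_ofNat]
  linarith


lemma split_residues {E : Type*} [NormedAddCommGroup E] [CompleteSpace E] (q : ℕ) [NeZero q] (F : ℤ → E) (S : E)
    (hF : HasSum F S) (A : ZMod q → E)
    (hA : ∀ c : ZMod q, HasSum (fun m : ℤ => F (m * q + c.val)) (A c)) :
    S = ∑ c, A c := by
  obtain ⟨p, rfl⟩ : ∃ p, q = p + 1 := ⟨q - 1, (Nat.sub_add_cancel (NeZero.one_le)).symm⟩
  have h1 := (Int.divModEquiv (p+1)).symm.hasSum_iff.mpr hF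
  have h2 := (Equiv.prodComm (Fin (p+1)) ℤ).hasSum_iff.mpr h1
  have h3 := h2.prod_fiberwise (g := fun c : Fin (p+1) => A c) (fun c => by
    have := hA c
    have hv : ZMod.val (n := p + 1) c = (c : ℕ) := rfl
    rw [hv] at this
    simpa [Function.comp_def, Int.divModEquiv] using this)
  exact h3.unique (hasSum_fintype _)

lemma summable_residue (q : ℕ) [NeZero q] (F : ℤ → ℝ) (hF : Summable F) (c : ZMod q) :
    Summable (fun m : ℤ => F (m * q + c.val)) := by
  refine hF.comp_injective (i := fun m : ℤ => m * q + c.val) ?_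
  intro a b h
  have hq : (q:ℤ) ≠ 0 := by exact_mod_cast NeZero.ne q
  have h' : a * (q:ℤ) = b * q := by simpa using h
  exact mul_right_cancel₀ hq h'

lemma hasSum_exp_abs (δ : ℝ) (hδ : 0 < δ) :
    ∃ S, HasSum (fun m : ℤ => if m = 0 then 0 else rexp (-(|(m:ℝ)| * δ))) S ∧ S ≤ 2 / δ := by
  have hr : rexp (-δ) < 1 := by rw [Real.exp_lt_one_iff]; linarith
  have h1 : HasSum (fun n : ℕ => rexp (-(((n:ℝ)+1) * δ))) (rexp (-δ) * (1 - rexp (-δ))⁻¹) := by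
    have := (hasSum_geometric_of_lt_one (Real.exp_pos _).le hr).mul_left (rexp (-δ))
    refine this.congr_fun ?_ 
    intro n
    rw [← Real.exp_nat_mul, ← Real.exp_add]; congr 1; ring
  have hb : rexp (-δ) * (1 - rexp (-δ))⁻¹ ≤ 1 / δ := by
    rw [← div_eq_mul_inv, div_le_div_iff₀ (by linarith) hδ]
    have h2 := Real.add_one_le_exp δ
    have h3 : rexp (-δ) * rexp δ = 1 := by rw [← Real.exp_add]; simp
    have := Real.exp_pos (-δ)
    nlinarith
  refine ⟨rexp (-δ) * (1 - rexp (-δ))⁻¹ + rexp (-δ) * (1 - rexp (-δ))⁻¹, ?_, ?_⟩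
  · have h0 : HasSum (fun n : ℕ => (fun m : ℤ => if m = 0 then 0 else rexp (-(|(m:ℝ)| * δ))) (n:ℤ))
        (rexp (-δ) * (1 - rexp (-δ))⁻¹) := by
      rw [← hasSum_nat_add_iff' 1]
      simp only [Finset.range_one, Finset.sum_singleton]
      simp only [Nat.cast_zero, if_true, sub_zero]
      refine h1.congr_fun ?_
      intro n
      have h4 : ((n + 1 : ℕ) : ℤ) ≠ 0 := by positivity
      rw [if_neg h4]
      have : (0:ℝ) ≤ (n:ℝ) + 1 := by positivity
      push_cast
      rw [abs_of_nonneg this]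
    refine HasSum.of_nat_of_neg_add_one h0 ?_
    refine h1.congr_fun ?_
    intro n
    have h4 : (-((n:ℤ) + 1)) ≠ 0 := by omega
    rw [if_neg h4]
    have : (0:ℝ) ≤ (n:ℝ) + 1 := by positivity
    push_cast
    rw [abs_neg, abs_of_nonneg this]
  · have : 2 / δ = 1 / δ + 1 / δ := by ring
    linarith

lemma kernel_bound (q : ℕ) [Fact q.Prime] (t : ℝ) (ht : 0 < t) (g : ℝ → ℝ) (D : ℝ)
    (hg : ∀ y : ℝ, 1 / q ≤ |y| → |g y| ≤ D * rexp (-(|y| * √t)))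
    (N : ZMod q → ℝ)
    (hN : ∀ b : ZMod q, HasSum (fun n : ℤ => g (n + b.val / q)) (N b)) :
    ∑ b ∈ Finset.univ.erase 0, |N b| ≤ D * (2 * q / √t) := by
  have hq0 : (0:ℝ) < q := by exact_mod_cast (Fact.out : q.Prime).pos
  have hst : 0 < √t := Real.sqrt_pos.mpr ht
  have hD : 0 ≤ D := by
    have := (abs_nonneg _).trans (hg (1/q) (le_abs_self _))
    exact nonneg_of_mul_nonneg_left this (Real.exp_pos _)
  obtain ⟨S, hS, hSb⟩ := hasSum_exp_abs (√t / q) (by positivity)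
  set F : ℤ → ℝ := fun m : ℤ => if m = 0 then 0 else rexp (-(|(m:ℝ)| * (√t / q))) with hF
  have hA := fun c : ZMod q => (summable_residue q F hS.summable c)
  have hsplit := split_residues q F S hS _ (fun c => (hA c).hasSum)
  have hF0 : ∀ m, 0 ≤ F m := by intro m; simp only [hF]; split_ifs <;> positivity
  have hNb : ∀ b ∈ Finset.univ.erase (0 : ZMod q), |N b| ≤ D * ∑' m : ℤ, F (m * q + b.val) := by
    intro b hb
    have hb0 : b ≠ 0 := Finset.ne_of_mem_erase hb
    rw [← tsum_mul_left, ← (hN b).tsum_eq]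
    rw [← Real.norm_eq_abs]
    refine tsum_of_norm_bounded ((hA b).mul_left D).hasSum ?_
    intro n
    have hm : (n * q + b.val : ℤ) ≠ 0 := by
      intro h
      have h2 : (((n * q + b.val : ℤ)) : ZMod q) = 0 := by rw [h]; simp
      simp at h2
      exact hb0 h2
    have hm1 : (1:ℝ) ≤ |((n * q + b.val : ℤ) : ℝ)| := by
      have := Int.one_le_abs hm
      exact_mod_cast this
    have hy : |(n : ℝ) + b.val / q| = |((n * q + b.val : ℤ) : ℝ)| / q := by
      rw [← abs_of_pos hq0, ← abs_div, abs_of_pos hq0]; congr 1; push_cast; field_simp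
    rw [Real.norm_eq_abs]
    refine (hg _ ?_).trans (le_of_eq ?_)
    · rw [hy]; gcongr
    · simp only [hF]; rw [if_neg hm, hy]; congr 3; ring
  calc ∑ b ∈ Finset.univ.erase 0, |N b| 
      ≤ ∑ b ∈ Finset.univ.erase 0, D * ∑' m : ℤ, F (m * q + b.val) := Finset.sum_le_sum hNb
    _ ≤ ∑ b : ZMod q, D * ∑' m : ℤ, F (m * q + b.val) := by
        apply Finset.sum_le_sum_of_subset_of_nonneg (Finset.erase_subset _ _)
        intro b _ _
        exact mul_nonneg hD (tsum_nonneg fun m => hF0 _)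
    _ = D * S := by rw [← Finset.mul_sum, ← hsplit]
    _ ≤ D * (2 / (√t / q)) := by gcongr
    _ = _ := by congr 1; field_simp

lemma gauss_bd0 (δ y : ℝ) (hδ : 0 < δ) (hy : δ ≤ y) :
    rexp (-π * y ^ 2) ≤ 2 * rexp (-δ ^ 2) * rexp (-y) ∧
    y * rexp (-π * y ^ 2) ≤ 2 * rexp (-δ ^ 2) * rexp (-y) := by
  have hpi := Real.pi_gt_three
  have hy0 : 0 < y := by linarith
  have h1 : -π * y ^ 2 ≤ -δ^2 + -2 * y^2 := by
    have : δ ^ 2 ≤ y ^ 2 := by gcongr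
    nlinarith [sq_nonneg y]
  have he : rexp (1/2) ≤ 2 := by
    have h := Real.exp_one_lt_d9
    have h2 : rexp (1/2) * rexp (1/2) = rexp 1 := by rw [← Real.exp_add]; norm_num
    nlinarith [Real.exp_pos (1/2:ℝ)]
  have key : rexp (1/2 + (-δ^2) + (-y)) ≤ 2 * rexp (-δ ^ 2) * rexp (-y) := by
    rw [Real.exp_add, Real.exp_add]
    gcongr
  constructor
  · refine le_trans (Real.exp_le_exp.mpr ?_) key
    nlinarith [sq_nonneg (2*y - 1)]
  · have h2 : y ≤ rexp y := by linarith [Real.add_one_le_exp y]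
    calc _ ≤ rexp y * rexp (-π * y ^ 2) := by gcongr
      _ = rexp (y + -π * y ^2) := by rw [Real.exp_add]
      _ ≤ _ := by
        refine le_trans (Real.exp_le_exp.mpr ?_) key
        nlinarith [sq_nonneg (2*y - 1)]

open HurwitzZeta in
lemma even_bound (q : ℕ) [Fact q.Prime] (t : ℝ) (ht : 0 < t) :
    ∑ b ∈ Finset.univ.erase 0, |evenKernel (ZMod.toAddCircle (b : ZMod q)) t| ≤
      2 * rexp (-(t / q^2)) * (2 * q / √t) := by
  have hq0 : (0:ℝ) < q := by exact_mod_cast (Fact.out : q.Prime).pos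
  have hst : 0 < √t := Real.sqrt_pos.mpr ht
  apply kernel_bound q t ht (fun y => rexp (-π * y^2 * t))
  · intro y hy
    have := (gauss_bd0 (√t / q) (|y| * √t) (by positivity) (by
      rw [div_eq_mul_one_div, mul_comm]; gcongr)).1
    rw [abs_of_pos (Real.exp_pos _)]
    convert this using 2
    · rw [mul_pow, Real.sq_sqrt ht.le, sq_abs]; ring
    · rw [div_pow, Real.sq_sqrt ht.le]
  · intro b
    rw [ZMod.toAddCircle_apply]
    exact hasSum_int_evenKernel _ ht

open HurwitzZeta in
lemma odd_bound (q : ℕ) [Fact q.Prime] (t : ℝ) (ht : 0 < t) :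
    ∑ b ∈ Finset.univ.erase 0, |oddKernel (ZMod.toAddCircle (b : ZMod q)) t| ≤
      2 * rexp (-(t / q^2)) / √t * (2 * q / √t) := by
  have hq0 : (0:ℝ) < q := by exact_mod_cast (Fact.out : q.Prime).pos
  have hst : 0 < √t := Real.sqrt_pos.mpr ht
  apply kernel_bound q t ht (fun y => y * rexp (-π * y^2 * t))
  · intro y hy
    have := (gauss_bd0 (√t / q) (|y| * √t) (by positivity) (by
      rw [div_eq_mul_one_div, mul_comm]; gcongr)).2
    rw [abs_mul, abs_of_pos (Real.exp_pos _)]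
    have e1 : -π * y ^2 * t = -π * (|y| * √t)^2 := by
      rw [mul_pow, Real.sq_sqrt ht.le, sq_abs]; ring
    have e2 : -(t/q^2) = -(√t / q)^2 := by
      rw [div_pow, Real.sq_sqrt ht.le]
    rw [e1, e2, div_mul_eq_mul_div, le_div_iff₀ hst]
    linarith
  · intro b
    rw [ZMod.toAddCircle_apply]
    exact hasSum_int_oddKernel _ ht


lemma gauss_twist (q : ℕ) [Fact q.Prime] (χ : DirichletCharacter ℂ q) (hχ : χ ≠ 1) (c : ZMod q) :
    ∑ b, χ b * ZMod.stdAddChar (b * c) =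
      (starRingEnd ℂ) (χ c) * gaussSum χ (ZMod.stdAddChar (N := q)) := by
  have h3 : (starRingEnd ℂ) (χ c) = χ⁻¹ c := MulChar.star_apply' χ c
  rw [h3]
  by_cases hc : c = 0
  · subst hc
    simp [MulChar.sum_eq_zero_of_ne_one hχ, MulChar.map_zero]
  · obtain ⟨v, rfl⟩ := isUnit_iff_ne_zero.mpr hc
    rw [← gaussSum_mulShift_eq]
    simp only [gaussSum, AddChar.mulShift_apply, mul_comm]

lemma gauss_norm (q : ℕ) [Fact q.Prime] (χ : DirichletCharacter ℂ q) (hχ : χ ≠ 1) :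
    ‖gaussSum χ (ZMod.stdAddChar (N := q))‖ = √q := by
  have h := gaussSum_mul_gaussSum_eq_card hχ (ZMod.isPrimitive_stdAddChar q)
  have h2 : gaussSum χ⁻¹ (ZMod.stdAddChar (N := q))⁻¹ =
      (starRingEnd ℂ) (gaussSum χ (ZMod.stdAddChar (N := q))) := by
    simp only [gaussSum, map_sum, map_mul]
    refine Finset.sum_congr rfl fun a _ => ?_
    have h3 : (starRingEnd ℂ) (χ a) = χ⁻¹ a := MulChar.star_apply' χ a
    rw [h3, AddChar.inv_apply, AddChar.map_neg_eq_conj]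
  rw [h2, Complex.mul_conj, ZMod.card, Complex.normSq_eq_norm_sq] at h
  have h4 : ‖gaussSum χ (ZMod.stdAddChar (N := q))‖ ^ 2 = q := by exact_mod_cast h
  rw [← h4, Real.sqrt_sq (norm_nonneg _)]

lemma exp_std (q : ℕ) [NeZero q] (b c : ZMod q) (m : ℤ) :
    cexp (2 * π * I * ((b.val / q : ℝ) : ℂ) * ((m * q + c.val : ℤ) : ℂ)) =
      ZMod.stdAddChar (b * c) := by
  have h : b * c = (((b.val : ℤ) * (m * q + c.val) : ℤ) : ZMod q) := by
    push_cast; simp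
  rw [h, ZMod.stdAddChar_coe]
  congr 1
  push_cast; ring

open HurwitzZeta in
lemma cos_split (q : ℕ) [NeZero q] (b : ZMod q) (s : ℝ) (hs : 0 < s) :
    (cosKernel (ZMod.toAddCircle b) s : ℂ) =
      ∑ c : ZMod q, ZMod.stdAddChar (b * c) * (evenKernel (ZMod.toAddCircle c) (q ^ 2 * s) : ℂ) := by
  have hq0 : (0:ℝ) < q := by exact_mod_cast NeZero.pos q
  rw [ZMod.toAddCircle_apply]
  refine split_residues q _ _ (hasSum_int_cosKernel (b.val / q) hs) _ ?_
  intro c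
  rw [ZMod.toAddCircle_apply]
  have h1 := hasSum_int_evenKernel (c.val / q) (t := q ^ 2 * s) (by positivity)
  have h2 := (Complex.hasSum_ofReal.mpr h1).mul_left (ZMod.stdAddChar (b * c))
  refine h2.congr_fun fun m => ?_
  rw [exp_std]
  congr 3
  push_cast
  field_simp

open HurwitzZeta in
lemma sin_split (q : ℕ) [NeZero q] (b : ZMod q) (s : ℝ) (hs : 0 < s) :
    (sinKernel (ZMod.toAddCircle b) s : ℂ) =
      ∑ c : ZMod q, ZMod.stdAddChar (b * c) * (-I * q * (oddKernel (ZMod.toAddCircle c) (q ^ 2 * s) : ℂ)) := by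
  have hq0 : (0:ℝ) < q := by exact_mod_cast NeZero.pos q
  have hq1 : (q:ℂ) ≠ 0 := by exact_mod_cast hq0.ne'
  rw [ZMod.toAddCircle_apply]
  refine split_residues q _ _ (hasSum_int_sinKernel (b.val / q) hs) _ ?_
  intro c
  rw [ZMod.toAddCircle_apply]
  have h1 := hasSum_int_oddKernel (c.val / q) (x := q ^ 2 * s) (by positivity)
  have h2 := ((Complex.hasSum_ofReal.mpr h1).mul_left (-I * q)).mul_left (ZMod.stdAddChar (b * c))
  refine h2.congr_fun fun m => ?_
  rw [exp_std]
  have : rexp (-π * ((m * q + c.val : ℤ) : ℝ) ^ 2 * s) = rexp (-π * (m + c.val / q) ^ 2 * (q ^ 2 * s)) := by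
    congr 1; push_cast; field_simp
  rw [this]
  push_cast
  field_simp

open HurwitzZeta in
lemma even_FE (q : ℕ) [Fact q.Prime] (χ : DirichletCharacter ℂ q) (hχ : χ ≠ 1) (t : ℝ) (ht : 0 < t) :
    ∑ b, χ b * (evenKernel (ZMod.toAddCircle b) t : ℂ) =
      gaussSum χ (ZMod.stdAddChar (N := q)) * ((1 / t ^ (1/2 : ℝ) : ℝ) : ℂ) *
        (starRingEnd ℂ) (∑ b, χ b * (evenKernel (ZMod.toAddCircle b) (q ^ 2 * (1 / t)) : ℂ)) := by
  have h1 : ∀ b : ZMod q, (evenKernel (ZMod.toAddCircle b) t : ℂ) = ((1 / t ^ (1/2 : ℝ) : ℝ) : ℂ) *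
      ∑ c : ZMod q, ZMod.stdAddChar (b * c) * (evenKernel (ZMod.toAddCircle c) (q ^ 2 * (1/t)) : ℂ) := by
    intro b
    rw [evenKernel_functional_equation, Complex.ofReal_mul, cos_split _ _ _ (by positivity)]
  simp only [h1]
  rw [map_sum, Finset.mul_sum]
  simp only [Finset.mul_sum]
  rw [Finset.sum_comm]
  refine Finset.sum_congr rfl fun c _ => ?_
  have := gauss_twist q χ hχ c
  rw [map_mul, Complex.conj_ofReal]
  calc _ = (∑ b, χ b * ZMod.stdAddChar (b * c)) * ((1 / t ^ (1/2 : ℝ) : ℝ) : ℂ) *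
      (evenKernel (ZMod.toAddCircle c) (q ^ 2 * (1/t)) : ℂ) := by
        rw [Finset.sum_mul, Finset.sum_mul]
        exact Finset.sum_congr rfl fun b _ => by ring
    _ = _ := by rw [this]; ring

open HurwitzZeta in
lemma odd_FE (q : ℕ) [Fact q.Prime] (χ : DirichletCharacter ℂ q) (hχ : χ ≠ 1) (t : ℝ) (ht : 0 < t) :
    ∑ b, χ b * (oddKernel (ZMod.toAddCircle b) t : ℂ) =
      gaussSum χ (ZMod.stdAddChar (N := q)) * (-I * q) * ((1 / t ^ (3/2 : ℝ) : ℝ) : ℂ) *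
        (starRingEnd ℂ) (∑ b, χ b * (oddKernel (ZMod.toAddCircle b) (q ^ 2 * (1 / t)) : ℂ)) := by
  have h1 : ∀ b : ZMod q, (oddKernel (ZMod.toAddCircle b) t : ℂ) = ((1 / t ^ (3/2 : ℝ) : ℝ) : ℂ) *
      ∑ c : ZMod q, ZMod.stdAddChar (b * c) * (-I * q * (oddKernel (ZMod.toAddCircle c) (q ^ 2 * (1/t)) : ℂ)) := by
    intro b
    rw [oddKernel_functional_equation, Complex.ofReal_mul, sin_split _ _ _ (by positivity)]
  simp only [h1]
  rw [map_sum, Finset.mul_sum]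
  simp only [Finset.mul_sum]
  rw [Finset.sum_comm]
  refine Finset.sum_congr rfl fun c _ => ?_
  have := gauss_twist q χ hχ c
  rw [map_mul, Complex.conj_ofReal]
  calc _ = (∑ b, χ b * ZMod.stdAddChar (b * c)) * ((1 / t ^ (3/2 : ℝ) : ℝ) : ℂ) *
      (-I * q * (oddKernel (ZMod.toAddCircle c) (q ^ 2 * (1/t)) : ℂ)) := by
        rw [Finset.sum_mul, Finset.sum_mul]
        exact Finset.sum_congr rfl fun b _ => by ring
    _ = _ := by rw [this]; ring


lemma tpow (q : ℕ) [Fact q.Prime] (x r : ℝ) :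
    ((q:ℝ) * rexp x) ^ r = rexp ((Real.log q + x) * r) := by
  have hq0 : (0:ℝ) < q := by exact_mod_cast (Fact.out : q.Prime).pos
  rw [Real.exp_mul, Real.exp_add, Real.exp_log hq0]

noncomputable def eE (q : ℕ) [NeZero q] (b : ZMod q) (x : ℝ) : ℂ :=
  (evenKernel (ZMod.toAddCircle b) (q * rexp x) : ℂ) * ((((q:ℝ) * rexp x) ^ (1/4 : ℝ) : ℝ) : ℂ)

noncomputable def eO (q : ℕ) [NeZero q] (b : ZMod q) (x : ℝ) : ℂ :=
  (oddKernel (ZMod.toAddCircle b) (q * rexp x) : ℂ) * ((((q:ℝ) * rexp x) ^ (3/4 : ℝ) : ℝ) : ℂ)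

lemma eE_cont (q : ℕ) [Fact q.Prime] (b : ZMod q) : Continuous (eE q b) := by
  have hq0 : (0:ℝ) < q := by exact_mod_cast (Fact.out : q.Prime).pos
  unfold eE
  simp_rw [tpow]
  have h : Continuous fun x : ℝ => evenKernel (ZMod.toAddCircle b) (q * rexp x) :=
    (continuousOn_evenKernel _).comp_continuous (by fun_prop)
      (fun x => by simp only [Set.mem_Ioi]; positivity)
  fun_prop

lemma eO_cont (q : ℕ) [Fact q.Prime] (b : ZMod q) : Continuous (eO q b) := by
  have hq0 : (0:ℝ) < q := by exact_mod_cast (Fact.out : q.Prime).pos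
  unfold eO
  simp_rw [tpow]
  have h : Continuous fun x : ℝ => oddKernel (ZMod.toAddCircle b) (q * rexp x) :=
    (continuousOn_oddKernel _).comp_continuous (by fun_prop)
      (fun x => by simp only [Set.mem_Ioi]; positivity)
  fun_prop

lemma eE_bound (q : ℕ) [Fact q.Prime] (x : ℝ) :
    ∑ b ∈ Finset.univ.erase 0, ‖eE q b x‖ ≤
      (4 * rexp (Real.log q * (3/4))) * (rexp (-x / 4) * rexp (-(rexp x / q))) := by
  have hq0 : (0:ℝ) < q := by exact_mod_cast (Fact.out : q.Prime).pos
  have h := even_bound q (q * rexp x) (by positivity)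
  have h1 : ∀ b : ZMod q, ‖eE q b x‖ =
      |evenKernel (ZMod.toAddCircle b) (q * rexp x)| * rexp ((Real.log q + x) * (1/4)) := by
    intro b
    unfold eE
    rw [tpow, norm_mul, Complex.norm_real, Complex.norm_real, Real.norm_eq_abs,
      Real.norm_eq_abs, Real.abs_exp]
  simp_rw [h1]
  rw [← Finset.sum_mul]
  refine (mul_le_mul_of_nonneg_right h (Real.exp_pos _).le).trans (le_of_eq ?_)
  have h2 : (q:ℝ) * rexp x / q^2 = rexp x / q := by field_simp
  rw [h2, Real.sqrt_eq_rpow, tpow]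
  have h3 : (q:ℝ) = rexp (Real.log q) := (Real.exp_log hq0).symm
  have h4 : (q:ℝ) / rexp ((Real.log q + x) * (1/2)) * rexp ((Real.log q + x) * (1/4)) =
      rexp (Real.log q * (3/4)) * rexp (-x/4) := by
    conv_lhs => rw [h3]
    rw [Real.log_exp, ← Real.exp_sub, ← Real.exp_add, ← Real.exp_add]
    congr 1; ring
  linear_combination 4 * rexp (-(rexp x / q)) * h4

lemma eO_bound (q : ℕ) [Fact q.Prime] (x : ℝ) :
    ∑ b ∈ Finset.univ.erase 0, ‖eO q b x‖ ≤
      (4 * rexp (Real.log q * (3/4))) * (rexp (-x / 4) * rexp (-(rexp x / q))) := by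
  have hq0 : (0:ℝ) < q := by exact_mod_cast (Fact.out : q.Prime).pos
  have h := odd_bound q (q * rexp x) (by positivity)
  have h1 : ∀ b : ZMod q, ‖eO q b x‖ =
      |oddKernel (ZMod.toAddCircle b) (q * rexp x)| * rexp ((Real.log q + x) * (3/4)) := by
    intro b
    unfold eO
    rw [tpow, norm_mul, Complex.norm_real, Complex.norm_real, Real.norm_eq_abs,
      Real.norm_eq_abs, Real.abs_exp]
  simp_rw [h1]
  rw [← Finset.sum_mul]
  refine (mul_le_mul_of_nonneg_right h (Real.exp_pos _).le).trans (le_of_eq ?_)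
  have h2 : (q:ℝ) * rexp x / q^2 = rexp x / q := by field_simp
  rw [h2, Real.sqrt_eq_rpow, tpow]
  have h3 : (q:ℝ) = rexp (Real.log q) := (Real.exp_log hq0).symm
  have h4 : (q:ℝ) / rexp ((Real.log q + x) * (1/2)) / rexp ((Real.log q + x) * (1/2)) *
      rexp ((Real.log q + x) * (3/4)) =
      rexp (Real.log q * (3/4)) * rexp (-x/4) := by
    conv_lhs => rw [h3]
    rw [Real.log_exp, ← Real.exp_sub, ← Real.exp_sub, ← Real.exp_add, ← Real.exp_add]
    congr 1; ring
  linear_combination 4 * rexp (-(rexp x / q)) * h4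

lemma eE_FE (q : ℕ) [Fact q.Prime] (χ : DirichletCharacter ℂ q) (hχ : χ ≠ 1) :
    ∃ ε : ℂ, ‖ε‖ = 1 ∧ ∀ x, ∑ b, χ b * eE q b (-x) =
      ε * (starRingEnd ℂ) (∑ b, χ b * eE q b x) := by
  have hq0 : (0:ℝ) < q := by exact_mod_cast (Fact.out : q.Prime).pos
  have hs : 0 < √(q:ℝ) := Real.sqrt_pos.mpr hq0
  refine ⟨gaussSum χ (ZMod.stdAddChar (N := q)) * ((1 / √(q:ℝ) : ℝ) : ℂ), ?_, ?_⟩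
  · rw [norm_mul, gauss_norm q χ hχ, Complex.norm_real, Real.norm_eq_abs, abs_of_pos (by positivity)]
    field_simp
  intro x
  have h := even_FE q χ hχ (q * rexp (-x)) (by positivity)
  have h2 : (q:ℝ)^2 * (1 / (q * rexp (-x))) = q * rexp x := by
    rw [Real.exp_neg]; field_simp
  rw [h2] at h
  simp only [eE, ← mul_assoc, ← Finset.sum_mul]
  rw [h, map_mul, Complex.conj_ofReal]
  have h3 : 1 / ((q:ℝ) * rexp (-x)) ^ (1/2:ℝ) * ((q:ℝ) * rexp (-x)) ^ (1/4:ℝ) =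
      1 / √(q:ℝ) * ((q:ℝ) * rexp x) ^ (1/4:ℝ) := by
    have h5 : √(q:ℝ) = rexp (Real.log q * (1/2)) := by
      rw [Real.sqrt_eq_rpow, Real.rpow_def_of_pos hq0]
    rw [tpow, tpow, tpow, h5, one_div (rexp _), one_div (rexp _), ← Real.exp_neg, ← Real.exp_neg, ← Real.exp_add,
      ← Real.exp_add]
    congr 1; ring
  have h4 := congrArg (Complex.ofReal) h3
  rw [Complex.ofReal_mul, Complex.ofReal_mul] at h4
  linear_combination (gaussSum χ (ZMod.stdAddChar (N := q))) *
    (starRingEnd ℂ) (∑ b, χ b * (evenKernel (ZMod.toAddCircle b) (q * rexp x) : ℂ)) * h4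

lemma eO_FE (q : ℕ) [Fact q.Prime] (χ : DirichletCharacter ℂ q) (hχ : χ ≠ 1) :
    ∃ ε : ℂ, ‖ε‖ = 1 ∧ ∀ x, ∑ b, χ b * eO q b (-x) =
      ε * (starRingEnd ℂ) (∑ b, χ b * eO q b x) := by
  have hq0 : (0:ℝ) < q := by exact_mod_cast (Fact.out : q.Prime).pos
  have hs : 0 < √(q:ℝ) := Real.sqrt_pos.mpr hq0
  refine ⟨-I * gaussSum χ (ZMod.stdAddChar (N := q)) * ((1 / √(q:ℝ) : ℝ) : ℂ), ?_, ?_⟩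
  · rw [norm_mul, norm_mul, gauss_norm q χ hχ, Complex.norm_real, Real.norm_eq_abs,
      abs_of_pos (by positivity), norm_neg, Complex.norm_I]
    field_simp
  intro x
  have h := odd_FE q χ hχ (q * rexp (-x)) (by positivity)
  have h2 : (q:ℝ)^2 * (1 / (q * rexp (-x))) = q * rexp x := by
    rw [Real.exp_neg]; field_simp
  rw [h2] at h
  simp only [eO, ← mul_assoc, ← Finset.sum_mul]
  rw [h, map_mul, Complex.conj_ofReal]
  have h3 : (q:ℝ) * (1 / ((q:ℝ) * rexp (-x)) ^ (3/2:ℝ)) * ((q:ℝ) * rexp (-x)) ^ (3/4:ℝ) =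
      1 / √(q:ℝ) * ((q:ℝ) * rexp x) ^ (3/4:ℝ) := by
    have h5 : √(q:ℝ) = rexp (Real.log q * (1/2)) := by
      rw [Real.sqrt_eq_rpow, Real.rpow_def_of_pos hq0]
    have h6 : (q:ℝ) = rexp (Real.log q) := (Real.exp_log hq0).symm
    rw [tpow, tpow, tpow, h5]
    conv_lhs => enter [1,1]; rw [h6]
    rw [one_div, one_div, ← Real.exp_neg, ← Real.exp_neg, ← Real.exp_add,
      ← Real.exp_add, ← Real.exp_add]
    congr 1; ring
  have h4 := congrArg (Complex.ofReal) h3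
  rw [Complex.ofReal_mul, Complex.ofReal_mul, Complex.ofReal_mul, Complex.ofReal_natCast] at h4
  linear_combination (-I * gaussSum χ (ZMod.stdAddChar (N := q))) *
    (starRingEnd ℂ) (∑ b, χ b * (oddKernel (ZMod.toAddCircle b) (q * rexp x) : ℂ)) * h4

lemma core_eE (q : ℕ) [Fact q.Prime] (u : ZMod q → ℂ) (hu : ∀ a, ‖u a‖ ≤ 1) :
    ‖∑ χ ∈ (Finset.univ : Finset (DirichletCharacter ℂ q)).erase 1,
      (∑ a, u a * χ a) * (‖∫ x, ∑ b, χ b * eE q b x‖ : ℂ) ^ 2‖ ≤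
      32 * q * (4 * rexp (Real.log q * (3/4))) ^ 2 * (Real.log q + 1) :=
  core q u hu (eE q) (eE_cont q) _ (by positivity) (eE_bound q) (eE_FE q)

lemma core_eO (q : ℕ) [Fact q.Prime] (u : ZMod q → ℂ) (hu : ∀ a, ‖u a‖ ≤ 1) :
    ‖∑ χ ∈ (Finset.univ : Finset (DirichletCharacter ℂ q)).erase 1,
      (∑ a, u a * χ a) * (‖∫ x, ∑ b, χ b * eO q b x‖ : ℂ) ^ 2‖ ≤
      32 * q * (4 * rexp (Real.log q * (3/4))) ^ 2 * (Real.log q + 1) :=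
  core q u hu (eO q) (eO_cont q) _ (by positivity) (eO_bound q) (eO_FE q)


lemma mellin_real (f : ℝ → ℂ) (σ : ℝ) (q : ℝ) (hq : 0 < q) :
    mellin f σ = ∫ x : ℝ, f (q * rexp x) * (((q * rexp x) ^ σ : ℝ) : ℂ) := by
  rw [mellin_eq_fourier]
  simp only [Complex.ofReal_im, zero_div, Complex.ofReal_re]
  rw [Real.fourier_eq']
  simp only [inner_zero_right, mul_zero, Complex.ofReal_zero, zero_mul, Complex.exp_zero, one_smul]
  rw [← integral_neg_eq_self, ← integral_add_right_eq_self _ (Real.log q)]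
  congr 1
  ext x
  have h : rexp (x + Real.log q) = q * rexp x := by
    rw [Real.exp_add, Real.exp_log hq, mul_comm]
  rw [neg_neg, h, ← h, ← Real.exp_mul, h]
  rw [Complex.real_smul, mul_comm]
  congr 3
  ring


lemma even_mellin (q : ℕ) [Fact q.Prime] (χ : DirichletCharacter ℂ q) (hχ : χ ≠ 1) (s : ℂ) :
    ∑ b, χ b * (hurwitzEvenFEPair (ZMod.toAddCircle b)).Λ s =
      mellin (fun t => ∑ b, χ b * (evenKernel (ZMod.toAddCircle b) t : ℂ)) s := by
  have hsum : ∑ b, χ b = 0 := MulChar.sum_eq_zero_of_ne_one hχ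
  have hsum2 : ∑ b : ZMod q, χ b * (hurwitzEvenFEPair (ZMod.toAddCircle b)).f₀ = 0 := by
    refine Finset.sum_eq_zero fun b _ => ?_
    by_cases hb : b = 0
    · subst hb; rw [MulChar.map_zero, zero_mul]
    · have : (hurwitzEvenFEPair (ZMod.toAddCircle b)).f₀ = 0 := by
        simp [hurwitzEvenFEPair, hb]
      rw [this, mul_zero]
  have h1 : ∑ b, χ b * (hurwitzEvenFEPair (ZMod.toAddCircle b)).Λ s =
      ∑ b, χ b * mellin (hurwitzEvenFEPair (ZMod.toAddCircle b)).f_modif s := by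
    have h2 : ∀ b : ZMod q, χ b * (hurwitzEvenFEPair (ZMod.toAddCircle b)).Λ s =
      χ b * mellin (hurwitzEvenFEPair (ZMod.toAddCircle b)).f_modif s -
        (1/s) * (χ b * (hurwitzEvenFEPair (ZMod.toAddCircle b)).f₀) -
        (1/((1/2 : ℝ) - s)) * χ b := by
      intro b
      rw [WeakFEPair.Λ, WeakFEPair.Λ₀]
      simp only [smul_eq_mul]
      have h3 : (hurwitzEvenFEPair (ZMod.toAddCircle b)).g₀ = 1 := rfl
      have h4 : (hurwitzEvenFEPair (ZMod.toAddCircle b)).ε = 1 := rfl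
      have h5 : (hurwitzEvenFEPair (ZMod.toAddCircle b)).k = 1/2 := rfl
      rw [h3, h4, h5]
      ring
    rw [Finset.sum_congr rfl (fun b _ => h2 b), Finset.sum_sub_distrib, Finset.sum_sub_distrib,
      ← Finset.mul_sum, ← Finset.mul_sum, hsum, hsum2]
    ring
  rw [h1]
  have hIntg : ∀ b : ZMod q, IntegrableOn (fun t : ℝ => (t : ℂ) ^ (s - 1) •
      (hurwitzEvenFEPair (ZMod.toAddCircle b)).f_modif t) (Ioi 0) := fun b =>
    ((hurwitzEvenFEPair (ZMod.toAddCircle b)).isStrongFEPair_toStrongFEPair.hasMellin s).1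
  simp only [mellin]
  simp_rw [← integral_const_mul]
  rw [← integral_finsetSum _ (fun b _ => (hIntg b).const_mul _)]
  refine integral_congr_ae ?_
  have hne : ∀ᵐ t : ℝ ∂(volume.restrict (Ioi 0)), t ≠ 1 :=
    ae_restrict_of_ae (by simp [ae_iff])
  filter_upwards [hne, ae_restrict_mem measurableSet_Ioi] with t ht1 ht0
  have ht0' : 0 < t := ht0
  simp only [smul_eq_mul]
  rw [Finset.mul_sum]
  rcases lt_or_gt_of_ne ht1 with h | h
  · have h2 : ∀ b : ZMod q, χ b * ((t:ℂ)^(s-1) * (hurwitzEvenFEPair (ZMod.toAddCircle b)).f_modif t) =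
        (t:ℂ)^(s-1) * (χ b * (evenKernel (ZMod.toAddCircle b) t : ℂ)) -
        (t:ℂ)^(s-1) * ((t ^ (-(1/2:ℝ)) : ℝ) : ℂ) * χ b := by
      intro b
      have h3 : (hurwitzEvenFEPair (ZMod.toAddCircle b)).f_modif t =
          (evenKernel (ZMod.toAddCircle b) t : ℂ) - (1 * ((t ^ (-(1/2:ℝ)) : ℝ) : ℂ)) • (1:ℂ) := by
        rw [WeakFEPair.f_modif, Pi.add_apply, Set.indicator_of_notMem (by simp; linarith),
          Set.indicator_of_mem (by simp; exact ⟨ht0', h⟩), zero_add]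
        rfl
      rw [h3]; simp only [smul_eq_mul]; ring
    rw [Finset.sum_congr rfl (fun b _ => h2 b), Finset.sum_sub_distrib, ← Finset.mul_sum,
      ← Finset.mul_sum, hsum]
    ring
  · have h2 : ∀ b : ZMod q, χ b * ((t:ℂ)^(s-1) * (hurwitzEvenFEPair (ZMod.toAddCircle b)).f_modif t) =
        (t:ℂ)^(s-1) * (χ b * (evenKernel (ZMod.toAddCircle b) t : ℂ)) -
        (t:ℂ)^(s-1) * (χ b * (hurwitzEvenFEPair (ZMod.toAddCircle b)).f₀) := by
      intro b
      have h3 : (hurwitzEvenFEPair (ZMod.toAddCircle b)).f_modif t =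
          (evenKernel (ZMod.toAddCircle b) t : ℂ) -
            (hurwitzEvenFEPair (ZMod.toAddCircle b)).f₀ := by
        rw [WeakFEPair.f_modif, Pi.add_apply, Set.indicator_of_mem (by exact h),
          Set.indicator_of_notMem (by simp; intro; linarith), add_zero]
        rfl
      rw [h3]; ring
    rw [Finset.sum_congr rfl (fun b _ => h2 b), Finset.sum_sub_distrib, ← Finset.mul_sum,
      ← Finset.mul_sum, hsum2]
    ring

lemma odd_mellin (q : ℕ) [Fact q.Prime] (χ : DirichletCharacter ℂ q) (s : ℂ) :
    ∑ b, χ b * (hurwitzOddFEPair (ZMod.toAddCircle b)).Λ s =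
      mellin (fun t => ∑ b, χ b * (oddKernel (ZMod.toAddCircle b) t : ℂ)) s := by
  have hIntg : ∀ b : ZMod q, IntegrableOn (fun t : ℝ => (t : ℂ) ^ (s - 1) •
      (hurwitzOddFEPair (ZMod.toAddCircle b)).f t) (Ioi 0) := fun b =>
    ((isStrong_hurwitzOddFEPair (ZMod.toAddCircle b)).hasMellin s).1
  have h1 : ∀ b : ZMod q, (hurwitzOddFEPair (ZMod.toAddCircle b)).Λ s =
      mellin (hurwitzOddFEPair (ZMod.toAddCircle b)).f s := fun b =>
    ((isStrong_hurwitzOddFEPair (ZMod.toAddCircle b)).hasMellin s).2.symm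
  simp_rw [h1]
  simp only [mellin]
  simp_rw [← integral_const_mul]
  rw [← integral_finsetSum _ (fun b _ => (hIntg b).const_mul _)]
  congr 1
  ext t
  simp only [smul_eq_mul]
  rw [Finset.mul_sum]
  refine Finset.sum_congr rfl fun b _ => ?_
  have : (hurwitzOddFEPair (ZMod.toAddCircle b)).f t = (oddKernel (ZMod.toAddCircle b) t : ℂ) := rfl
  rw [this]; ring

noncomputable def hE (q : ℕ) [NeZero q] (χ : DirichletCharacter ℂ q) : ℂ :=
  ∫ x, ∑ b, χ b * eE q b x

noncomputable def hO (q : ℕ) [NeZero q] (χ : DirichletCharacter ℂ q) : ℂ :=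
  ∫ x, ∑ b, χ b * eO q b x

lemma mellin_hE (q : ℕ) [Fact q.Prime] (χ : DirichletCharacter ℂ q) :
    mellin (fun t => ∑ b, χ b * (evenKernel (ZMod.toAddCircle b) t : ℂ)) (1/4) = hE q χ := by
  have hq0 : (0:ℝ) < q := by exact_mod_cast (Fact.out : q.Prime).pos
  have h := mellin_real (fun t => ∑ b, χ b * (evenKernel (ZMod.toAddCircle b) t : ℂ)) (1/4) q hq0
  have h4 : (((1/4 : ℝ)) : ℂ) = 1/4 := by push_cast; rfl
  rw [h4] at h
  rw [h, hE]
  simp only [eE, Finset.sum_mul, mul_assoc]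

lemma mellin_hO (q : ℕ) [Fact q.Prime] (χ : DirichletCharacter ℂ q) :
    mellin (fun t => ∑ b, χ b * (oddKernel (ZMod.toAddCircle b) t : ℂ)) (3/4) = hO q χ := by
  have hq0 : (0:ℝ) < q := by exact_mod_cast (Fact.out : q.Prime).pos
  have h := mellin_real (fun t => ∑ b, χ b * (oddKernel (ZMod.toAddCircle b) t : ℂ)) (3/4) q hq0
  have h4 : (((3/4 : ℝ)) : ℂ) = 3/4 := by push_cast; rfl
  rw [h4] at h
  rw [h, hO]
  simp only [eO, Finset.sum_mul, mul_assoc]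

lemma hE_zero (q : ℕ) [Fact q.Prime] (χ : DirichletCharacter ℂ q) (h : χ.Odd) : hE q χ = 0 := by
  have : ∀ x, ∑ b, χ b * eE q b x = 0 := by
    intro x
    refine Function.Odd.sum_eq_zero (f := fun b => χ b * eE q b x) fun b => ?_
    simp only [eE, map_neg, evenKernel_neg, h.eval_neg]
    ring
  simp [hE, this]

lemma hO_zero (q : ℕ) [Fact q.Prime] (χ : DirichletCharacter ℂ q) (h : χ.Even) : hO q χ = 0 := by
  have : ∀ x, ∑ b, χ b * eO q b x = 0 := by
    intro x
    refine Function.Odd.sum_eq_zero (f := fun b => χ b * eO q b x) fun b => ?_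
    simp only [eO, map_neg, oddKernel_neg, h.eval_neg]
    push_cast
    ring
  simp [hO, this]

lemma L_even (q : ℕ) [Fact q.Prime] (χ : DirichletCharacter ℂ q) (hχ : χ ≠ 1) (h : χ.Even) :
    χ.LFunction (1/2) = (q:ℂ) ^ (-(1/2) : ℂ) * (hE q χ * (1 / (2 * Gammaℝ (1/2)))) := by
  rw [DirichletCharacter.LFunction, ZMod.LFunction_def_even (Φ := fun b => χ b) h.to_fun,
    ← mellin_hE, ← even_mellin q χ hχ, Finset.sum_mul]
  congr 1
  refine Finset.sum_congr rfl fun b _ => ?_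
  rw [hurwitzZetaEven_def_of_ne_or_ne (Or.inr (by norm_num)), completedHurwitzZetaEven]
  have : (1/2/2 : ℂ) = 1/4 := by norm_num
  rw [this]
  field_simp

lemma L_odd (q : ℕ) [Fact q.Prime] (χ : DirichletCharacter ℂ q) (h : χ.Odd) :
    χ.LFunction (1/2) = (q:ℂ) ^ (-(1/2) : ℂ) * (hO q χ * (1 / (2 * Gammaℝ (3/2)))) := by
  rw [DirichletCharacter.LFunction, ZMod.LFunction_def_odd (Φ := fun b => χ b) h.to_fun,
    ← mellin_hO, ← odd_mellin q χ, Finset.sum_mul]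
  congr 1
  refine Finset.sum_congr rfl fun b _ => ?_
  rw [hurwitzZetaOdd, completedHurwitzZetaOdd]
  have : ((1/2 + 1)/2 : ℂ) = 3/4 := by norm_num
  rw [this]
  have : (1/2 + 1 : ℂ) = 3/2 := by norm_num
  rw [this]
  field_simp

noncomputable def cE : ℝ := ‖(1 / (2 * Gammaℝ (1/2)) : ℂ)‖ ^ 2
noncomputable def cO : ℝ := ‖(1 / (2 * Gammaℝ (3/2)) : ℂ)‖ ^ 2

lemma L_sq (q : ℕ) [Fact q.Prime] (χ : DirichletCharacter ℂ q) (hχ : χ ≠ 1) :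
    ‖χ.LFunction (1/2)‖ ^ 2 = (q:ℝ)⁻¹ * (cE * ‖hE q χ‖ ^ 2 + cO * ‖hO q χ‖ ^ 2) := by
  have hq0 : (0:ℝ) < q := by exact_mod_cast (Fact.out : q.Prime).pos
  have hn : ‖(q:ℂ) ^ (-(1/2) : ℂ)‖ ^ 2 = (q:ℝ)⁻¹ := by
    have h1 : (q:ℂ) = ((q:ℝ) : ℂ) := by simp
    rw [h1, Complex.norm_cpow_eq_rpow_re_of_pos hq0, ← Real.rpow_natCast, ← Real.rpow_mul hq0.le,
      ← Real.rpow_neg_one]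
    congr 1
    norm_num
  rcases χ.even_or_odd with h | h
  · rw [L_even q χ hχ h, hO_zero q χ h, norm_mul, norm_mul, mul_pow, mul_pow, hn, cE]
    simp only [norm_zero]; ring
  · rw [L_odd q χ h, hE_zero q χ h, norm_mul, norm_mul, mul_pow, mul_pow, hn, cO]
    simp only [norm_zero]; ring


lemma dual_bound (q : ℕ) [Fact q.Prime] :
    ∑ a : ZMod q, ‖∑ χ ∈ (Finset.univ : Finset (DirichletCharacter ℂ q)).erase 1,
      (‖χ.LFunction (1/2)‖ ^ 2 : ℂ) * χ a‖ ≤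
      (q:ℝ)⁻¹ * (cE + cO) *
        (32 * q * (4 * rexp (Real.log q * (3/4))) ^ 2 * (Real.log q + 1)) := by
  have hq0 : (0:ℝ) < q := by exact_mod_cast (Fact.out : q.Prime).pos
  set B := 32 * q * (4 * rexp (Real.log q * (3/4))) ^ 2 * (Real.log q + 1) with hB
  set S : ZMod q → ℂ := fun a => ∑ χ ∈ (Finset.univ : Finset (DirichletCharacter ℂ q)).erase 1,
      (‖χ.LFunction (1/2)‖ ^ 2 : ℂ) * χ a with hS
  have hex : ∀ z : ℂ, ∃ w : ℂ, ‖w‖ ≤ 1 ∧ w * z = (‖z‖ : ℂ) := by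
    intro z
    by_cases hz : z = 0
    · exact ⟨0, by simp, by simp [hz]⟩
    · have hz' : (‖z‖ : ℂ) ≠ 0 := by simpa using hz
      refine ⟨(‖z‖ : ℂ) / z, ?_, by field_simp⟩
      rw [norm_div, Complex.norm_real, norm_norm, div_self (by simpa using hz)]
  choose w hw1 hw2 using hex
  set u : ZMod q → ℂ := fun a => w (S a) with hu
  have hu1 : ∀ a, ‖u a‖ ≤ 1 := fun a => hw1 _
  have h1 : ((∑ a, ‖S a‖ : ℝ) : ℂ) = ∑ a, u a * S a := by
    push_cast
    exact Finset.sum_congr rfl fun a _ => (hw2 (S a)).symm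
  have h2 : ∑ a, u a * S a = (q:ℂ)⁻¹ *
      ((cE : ℂ) * ∑ χ ∈ (Finset.univ : Finset (DirichletCharacter ℂ q)).erase 1,
        (∑ a, u a * χ a) * (‖hE q χ‖ : ℂ) ^ 2 +
       (cO : ℂ) * ∑ χ ∈ (Finset.univ : Finset (DirichletCharacter ℂ q)).erase 1,
        (∑ a, u a * χ a) * (‖hO q χ‖ : ℂ) ^ 2) := by
    simp only [hS, Finset.mul_sum]
    rw [Finset.sum_comm, ← Finset.sum_add_distrib, Finset.mul_sum]
    refine Finset.sum_congr rfl fun χ hχ => ?_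
    have hχ1 : χ ≠ 1 := (Finset.mem_erase.mp hχ).1
    have h3 := congrArg Complex.ofReal (L_sq q χ hχ1)
    push_cast at h3
    rw [h3]
    have h4 : ∑ a, u a * ((q:ℂ)⁻¹ * (cE * (‖hE q χ‖:ℂ) ^ 2 + cO * (‖hO q χ‖:ℂ) ^ 2) * χ a) =
        (∑ a, u a * χ a) * ((q:ℂ)⁻¹ * (cE * (‖hE q χ‖:ℂ) ^ 2 + cO * (‖hO q χ‖:ℂ) ^ 2)) := by
      rw [Finset.sum_mul]
      exact Finset.sum_congr rfl fun a _ => by ring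
    rw [h4]
    ring
  have hE1 := core_eE q u hu1
  have hO1 := core_eO q u hu1
  have hcE : 0 ≤ cE := by unfold cE; positivity
  have hcO : 0 ≤ cO := by unfold cO; positivity
  have h5 : ∑ a, ‖S a‖ = ‖∑ a, u a * S a‖ := by
    rw [← h1, Complex.norm_real, Real.norm_eq_abs, abs_of_nonneg]
    positivity
  rw [h5, h2, norm_mul, mul_assoc]
  have h6 : ‖(q:ℂ)⁻¹‖ = (q:ℝ)⁻¹ := by simp
  rw [h6]
  refine mul_le_mul_of_nonneg_left ?_ (by positivity)
  refine (norm_add_le _ _).trans ?_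
  rw [norm_mul, norm_mul, Complex.norm_real, Complex.norm_real, Real.norm_eq_abs,
    Real.norm_eq_abs, abs_of_nonneg hcE, abs_of_nonneg hcO, add_mul]
  exact add_le_add (mul_le_mul_of_nonneg_left hE1 hcE) (mul_le_mul_of_nonneg_left hO1 hcO)

lemma sum_Icc_zmod (q : ℕ) [NeZero q] (f : ZMod q → ℝ) :
    ∑ a ∈ Finset.Icc 1 q, f (a : ZMod q) = ∑ a : ZMod q, f a := by
  have hq : 0 < q := NeZero.pos q
  refine Finset.sum_bij' (fun a _ => (a : ZMod q)) (fun b _ => if b = 0 then q else b.val)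
    (by simp) ?_ ?_ ?_ (by simp)
  · intro b _
    split_ifs with h
    · simp; omega
    · have h1 := b.val_lt
      have h2 : b.val ≠ 0 := by simpa using h
      simp only [Finset.mem_Icc]; omega
  · intro a ha
    simp only [Finset.mem_Icc] at ha
    split_ifs with h
    · have h2 := (ZMod.natCast_eq_zero_iff a q).mp h
      have := Nat.le_of_dvd (by omega) h2
      omega
    · have hne : a ≠ q := by rintro rfl; simp at h
      rw [ZMod.val_natCast, Nat.mod_eq_of_lt (by omega)]
  · intro b _
    split_ifs with h
    · simp [h]
    · simp

lemma Mtw_eq (q : ℕ) [Fact q.Prime] (a : ℕ) :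
    ‖Mtw a q‖ = √q / (q - 1) * ‖∑ χ ∈ (Finset.univ : Finset (DirichletCharacter ℂ q)).erase 1,
      (‖χ.LFunction (1/2)‖ ^ 2 : ℂ) * χ (a : ZMod q)‖ := by
  have hp : q.Prime := Fact.out
  have h1 : (1:ℝ) < q := by exact_mod_cast hp.one_lt
  rw [Mtw, norm_mul, Nat.totient_prime hp]
  congr 1
  · rw [← Complex.ofReal_div, Complex.norm_real, Nat.cast_sub hp.one_le, Nat.cast_one,
      Real.norm_eq_abs, abs_of_nonneg]
    exact div_nonneg (Real.sqrt_nonneg _) (by linarith)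
  · congr 1
    rw [← Finset.sum_erase_add _ _ (Finset.mem_univ (1 : DirichletCharacter ℂ q))]
    rw [if_pos rfl, add_zero]
    refine Finset.sum_congr (by congr) fun χ hχ => ?_
    rw [if_neg (Finset.mem_erase.mp hχ).1]
    simp

end Helpers

/-- Lemma 4 of the paper: the first absolute moment of `M(a,q)` is `O(q log q)`. -/
theorem first_moment_bound :
    ∃ C : ℝ, 0 < C ∧
      ∀ (q : ℕ) (hq : q.Prime),
        haveI : NeZero q := ⟨hq.ne_zero⟩
        ∑ a ∈ Finset.Icc 1 q, ‖Mtw a q‖ ≤ C * q * Real.log q := by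
  have hcE : 0 ≤ cE := by unfold cE; positivity
  have hcO : 0 ≤ cO := by unfold cO; positivity
  refine ⟨3072 * (cE + cO) + 1, by positivity, ?_⟩
  intro q hq
  haveI : Fact q.Prime := ⟨hq⟩
  have hq2 : (2:ℝ) ≤ q := by exact_mod_cast hq.two_le
  have hq0 : (0:ℝ) < q := by linarith
  have h := dual_bound q
  have hM : ∑ a ∈ Finset.Icc 1 q, ‖Mtw a q‖ = √q / (q - 1) *
      ∑ a : ZMod q, ‖∑ χ ∈ (Finset.univ : Finset (DirichletCharacter ℂ q)).erase 1,
      (‖χ.LFunction (1/2)‖ ^ 2 : ℂ) * χ a‖ := by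
    rw [← sum_Icc_zmod, Finset.mul_sum]
    exact Finset.sum_congr rfl fun a _ => Mtw_eq q a
  have hlog : 1 / 2 ≤ Real.log q := by
    have h1 := Real.log_two_gt_d9
    have h2 := Real.log_le_log (by norm_num) hq2
    linarith
  have hpos : 0 ≤ √(q:ℝ) / (q - 1) := div_nonneg (Real.sqrt_nonneg _) (by linarith)
  have hfrac : √(q:ℝ) / (q - 1) ≤ 2 * √q / q := by
    rw [div_le_div_iff₀ (by linarith) hq0]
    nlinarith [Real.sqrt_nonneg (q:ℝ)]
  have hexp : √(q:ℝ) * (rexp (Real.log q * (3/4))) ^ 2 = q ^ 2 := by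
    have h5 : √(q:ℝ) = rexp (Real.log q * (1/2)) := by
      rw [Real.sqrt_eq_rpow, Real.rpow_def_of_pos hq0]
    rw [h5, sq, ← Real.exp_add, ← Real.exp_add]
    have : Real.log q * (1/2) + (Real.log q * (3/4) + Real.log q * (3/4)) =
      Real.log q + Real.log q := by ring
    rw [this, Real.exp_add, Real.exp_log hq0, sq]
  have hR : 0 ≤ (q:ℝ)⁻¹ * (cE + cO) *
        (32 * q * (4 * rexp (Real.log q * (3/4))) ^ 2 * (Real.log q + 1)) := by positivity
  show ∑ a ∈ Finset.Icc 1 q, ‖Mtw a q‖ ≤ _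
  rw [hM]
  calc _ ≤ (2 * √q / q) * ((q:ℝ)⁻¹ * (cE + cO) *
        (32 * q * (4 * rexp (Real.log q * (3/4))) ^ 2 * (Real.log q + 1))) :=
      mul_le_mul hfrac h (by positivity) (by positivity)
    _ = 1024 * (cE + cO) * (√q * (rexp (Real.log q * (3/4))) ^ 2) / q * (Real.log q + 1) := by
      field_simp; ring
    _ = 1024 * (cE + cO) * q * (Real.log q + 1) := by
      rw [hexp]; field_simp
    _ ≤ 1024 * (cE + cO) * q * (3 * Real.log q) := by
      refine mul_le_mul_of_nonneg_left (by linarith) (by positivity)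
    _ ≤ _ := by
      have : 0 ≤ q * Real.log q := by positivity
      nlinarith
end

section
/- Let h, k, q be pairwise coprime positive integers with q ≥ 4hk. Write {−h·inv_k(q)/k} = [0; b_1, …, b_r] and {−k·inv_h(q)/h} = [0; c_1, …, c_s] for continued fraction expansions with r and s even (such expansions exist; r = 0 or s = 0 is allowed, representing 0). Then there exists a positive integer d with q/(hk) − 2 < d ≤ q/(hk) such that {h·inv_q(k)/q} equals the value of the finite continued fraction [0; b_1, …, b_r, d, c_s, …, c_1] (all of whose partial quotients are positive integers). -/
open Real

/-- Value of a finite continued fraction `[a_0; a_1, …, a_n]`. -/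
noncomputable def cfEval : List ℝ → ℝ
  | [] => 0
  | [a] => a
  | a :: b :: rest => a + 1/(cfEval (b :: rest))

def glueMat (a : ℕ) : Matrix (Fin 2) (Fin 2) ℤ := !![(a : ℤ), 1; 1, 0]

def glueProd (l : List ℕ) : Matrix (Fin 2) (Fin 2) ℤ := (l.map glueMat).prod

lemma glueProd_nil : glueProd [] = 1 := by simp [glueProd]

lemma glueProd_cons (a : ℕ) (l : List ℕ) :
    glueProd (a :: l) = glueMat a * glueProd l := by simp [glueProd]

lemma glueProd_append (l m : List ℕ) :
    glueProd (l ++ m) = glueProd l * glueProd m := by simp [glueProd]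

lemma glueMat_transpose (a : ℕ) : (glueMat a).transpose = glueMat a := by
  ext i j; fin_cases i <;> fin_cases j <;> simp [glueMat]

lemma glueProd_reverse (l : List ℕ) : glueProd l.reverse = (glueProd l).transpose := by
  induction l with
  | nil => simp [glueProd]
  | cons a l ih =>
    rw [List.reverse_cons, glueProd_append, ih, glueProd_cons a l, Matrix.transpose_mul,
      glueMat_transpose, glueProd_cons, glueProd_nil, mul_one]

lemma glueProd_det (l : List ℕ) : (glueProd l).det = (-1) ^ l.length := by
  induction l with
  | nil => simp [glueProd]
  | cons a l ih =>
    rw [glueProd_cons, Matrix.det_mul, ih, List.length_cons, pow_succ']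
    simp [glueMat, Matrix.det_fin_two]

lemma gc00 (a : ℕ) (l : List ℕ) :
    glueProd (a :: l) 0 0 = a * glueProd l 0 0 + glueProd l 1 0 := by
  simp [glueProd_cons, glueMat, Matrix.mul_apply, Fin.sum_univ_two]

lemma gc01 (a : ℕ) (l : List ℕ) :
    glueProd (a :: l) 0 1 = a * glueProd l 0 1 + glueProd l 1 1 := by
  simp [glueProd_cons, glueMat, Matrix.mul_apply, Fin.sum_univ_two]

lemma gc10 (a : ℕ) (l : List ℕ) : glueProd (a :: l) 1 0 = glueProd l 0 0 := by
  simp [glueProd_cons, glueMat, Matrix.mul_apply, Fin.sum_univ_two]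

lemma gc11 (a : ℕ) (l : List ℕ) : glueProd (a :: l) 1 1 = glueProd l 0 1 := by
  simp [glueProd_cons, glueMat, Matrix.mul_apply, Fin.sum_univ_two]

lemma glue_pos (l : List ℕ) (hl : ∀ x ∈ l, 0 < x) :
    1 ≤ glueProd l 0 0 ∧ 0 ≤ glueProd l 1 0 ∧ 0 ≤ glueProd l 0 1 ∧ 0 ≤ glueProd l 1 1 ∧
    glueProd l 0 1 ≤ glueProd l 0 0 ∧ (l = [] ∨ glueProd l 1 1 ≤ glueProd l 1 0) := by
  induction l with
  | nil => simp [glueProd_nil]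
  | cons a l ih =>
    have ha : (1 : ℤ) ≤ a := by exact_mod_cast hl a (by simp)
    obtain ⟨h1, h2, h3, h4, h5, h6⟩ := ih (fun x hx => hl x (by simp [hx]))
    rw [gc00, gc01, gc10, gc11]
    refine ⟨by nlinarith, by linarith, by positivity, h3, ?_, Or.inr h5⟩
    rcases h6 with rfl | h6
    · simp [glueProd_nil]; exact_mod_cast ha
    · nlinarith

lemma cfEval_cons_eq (x : ℝ) (l : List ℝ) : cfEval (x :: l) = x + cfEval (0 :: l) := by
  cases l <;> simp [cfEval]

lemma cfEval_glue (l : List ℕ) (hl : ∀ x ∈ l, 0 < x) :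
    cfEval ((0 : ℝ) :: l.map Nat.cast) = (glueProd l 1 0 : ℝ) / (glueProd l 0 0 : ℝ) := by
  induction l with
  | nil => simp [cfEval, glueProd_nil]
  | cons a l ih =>
    have hl' : ∀ x ∈ l, 0 < x := fun x hx => hl x (by simp [hx])
    have h1 : (1 : ℝ) ≤ (glueProd l 0 0 : ℝ) := by exact_mod_cast (glue_pos l hl').1
    have h2 : (1 : ℝ) ≤ (glueProd (a :: l) 0 0 : ℝ) := by exact_mod_cast (glue_pos _ hl).1
    rw [List.map_cons, cfEval, cfEval_cons_eq, ih hl', gc10]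
    rw [gc00] at h2 ⊢
    push_cast at h2 ⊢
    have e : (a : ℝ) + (glueProd l 1 0 : ℝ) / (glueProd l 0 0 : ℝ) =
      (a * (glueProd l 0 0 : ℝ) + (glueProd l 1 0 : ℝ)) / (glueProd l 0 0 : ℝ) := by
      field_simp
    rw [e, one_div_div, zero_add]

lemma glue_half (h k q : ℕ) (hk : 0 < k) (chk : Nat.Coprime h k) (iqk : ℤ)
    (hiqk : (q : ℤ) * iqk ≡ 1 [ZMOD (k : ℤ)]) (b : List ℕ) (hbpos : ∀ x ∈ b, 0 < x)
    (hbe : Even b.length)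
    (hbcf : Int.fract ((-(h : ℝ) * iqk)/k) = cfEval ((0 : ℝ) :: b.map (Nat.cast))) :
    glueProd b 0 0 = k ∧ 0 ≤ glueProd b 1 0 ∧ glueProd b 1 0 < k ∧ 0 ≤ glueProd b 0 1 ∧
    glueProd b 0 1 < k ∧ 0 ≤ glueProd b 1 1 ∧
    k * glueProd b 1 1 - glueProd b 0 1 * glueProd b 1 0 = 1 ∧
    (k : ℤ) ∣ q - h * glueProd b 0 1 := by
  have hdet := glueProd_det b
  rw [hbe.neg_one_pow, Matrix.det_fin_two] at hdet
  obtain ⟨h1, h2, h3, h4, h5, h6⟩ := glue_pos b hbpos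
  have h7 : glueProd b 0 1 < glueProd b 0 0 := by
    rcases h6 with rfl | h6
    · simp [glueProd_nil]
    · rcases h5.lt_or_eq with h | h
      · exact h
      · rw [h] at hdet; nlinarith
  rw [cfEval_glue b hbpos] at hbcf
  have hlt := Int.fract_lt_one ((-(h : ℝ) * iqk)/k)
  obtain ⟨_, _, z, hz⟩ := Int.fract_eq_iff.1 hbcf
  rw [hbcf] at hlt
  generalize glueProd b 0 0 = p at *
  generalize glueProd b 0 1 = w at *
  generalize glueProd b 1 0 = u at *
  generalize glueProd b 1 1 = v at *
  have hp : (0 : ℝ) < p := by exact_mod_cast (by omega : 0 < p)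
  have hk' : (0 : ℝ) < k := by exact_mod_cast hk
  rw [div_lt_one hp] at hlt
  have hlt : u < p := by exact_mod_cast hlt
  have hz2 : -(h : ℤ) * iqk * p - u * k = z * k * p := by
    field_simp at hz
    have : (-(h : ℝ) * iqk * p - u * k) = z * k * p := by linarith
    exact_mod_cast this
  obtain ⟨t, ht⟩ := hiqk.symm.dvd
  have cop : IsCoprime (k : ℤ) h := (Nat.isCoprime_iff_coprime.2 chk).symm
  have cop2 : IsCoprime (k : ℤ) iqk := ⟨-t, q, by linear_combination ht⟩
  have d1 : (k : ℤ) ∣ p := by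
    apply (cop.mul_right cop2).dvd_of_dvd_mul_left
    exact ⟨-u - z * p, by linear_combination -hz2⟩
  have cop3 : IsCoprime p u := ⟨v, -w, by linear_combination hdet⟩
  have d2 : p ∣ (k : ℤ) := by
    apply cop3.dvd_of_dvd_mul_left
    exact ⟨-h * iqk - z * k, by linear_combination -hz2⟩
  have hpk : p = k := Int.dvd_antisymm (by omega) (by omega) d2 d1
  subst hpk
  have hz3 : -(h : ℤ) * iqk - u = z * k := by
    have : (k : ℤ) ≠ 0 := by omega
    apply mul_right_cancel₀ this
    linear_combination hz2
  refine ⟨rfl, h2, hlt, h3, h7, h4, hdet, ?_⟩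
  -- modulo k: -u w = 1, u = -h i, q i = 1
  exact ⟨q * v + q * z * w + h * w * t,
    by linear_combination (-(q:ℤ)) * hdet + q * w * hz3 + h * w * ht⟩

/-- Lemma 5 of the paper: the continued fraction of `{h k̄ / q}` is obtained by glueing
those of `{-h q̄ / k}` and `{-k q̄ / h}` with a middle partial quotient `d ≈ q/(hk)`. -/
theorem continued_fraction_glueing (h k q : ℕ) (hh : 0 < h) (hk : 0 < k) (hq : 0 < q)
    (chk : Nat.Coprime h k) (chq : Nat.Coprime h q) (ckq : Nat.Coprime k q)
    (hbig : 4 * h * k ≤ q)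
    (iqk iqh ikq : ℤ)
    (hiqk : (q : ℤ) * iqk ≡ 1 [ZMOD (k : ℤ)])
    (hiqh : (q : ℤ) * iqh ≡ 1 [ZMOD (h : ℤ)])
    (hikq : (k : ℤ) * ikq ≡ 1 [ZMOD (q : ℤ)])
    (b c : List ℕ) (hbpos : ∀ x ∈ b, 0 < x) (hcpos : ∀ x ∈ c, 0 < x)
    (hbe : Even b.length) (hce : Even c.length)
    (hbcf : Int.fract ((-(h : ℝ) * iqk)/k) = cfEval ((0 : ℝ) :: b.map (Nat.cast)))
    (hccf : Int.fract ((-(k : ℝ) * iqh)/h) = cfEval ((0 : ℝ) :: c.map (Nat.cast))) :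
    ∃ d : ℕ, 0 < d ∧ (q : ℝ)/(h * k) - 2 < (d : ℝ) ∧ (d : ℝ) ≤ (q : ℝ)/(h * k) ∧
      Int.fract (((h : ℝ) * ikq)/q) =
        cfEval ((0 : ℝ) :: (b.map (Nat.cast) ++ [(d : ℝ)] ++ (c.map (Nat.cast)).reverse)) := by
  obtain ⟨b1, b2, b3, b4, b5, b6, b7, b8⟩ :=
    glue_half h k q hk chk iqk hiqk b hbpos hbe hbcf
  obtain ⟨c1, c2, c3, c4, c5, c6, c7, c8⟩ :=
    glue_half k h q hh chk.symm iqh hiqh c hcpos hce hccf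
  have hdiv : ((h : ℤ) * k) ∣ q - h * glueProd b 0 1 - k * glueProd c 0 1 := by
    apply (Nat.isCoprime_iff_coprime.2 chk).mul_dvd
    · have := dvd_sub c8 (Dvd.intro (glueProd b 0 1) rfl : (h : ℤ) ∣ h * glueProd b 0 1)
      convert this using 1; ring
    · exact dvd_sub b8 (Dvd.intro (glueProd c 0 1) rfl)
  obtain ⟨d, hd⟩ := hdiv
  have hhZ : (0 : ℤ) < h := by exact_mod_cast hh
  have hkZ : (0 : ℤ) < k := by exact_mod_cast hk
  have hqZ : (0 : ℤ) < q := by exact_mod_cast hq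
  have hhk : (0 : ℤ) < h * k := by positivity
  have hbigZ : 4 * (h : ℤ) * k ≤ q := by exact_mod_cast hbig
  have e1 : (h : ℤ) * glueProd b 0 1 < h * k := mul_lt_mul_of_pos_left b5 hhZ
  have e2 : (k : ℤ) * glueProd c 0 1 < h * k := by
    rw [mul_comm (h : ℤ)]; exact mul_lt_mul_of_pos_left c5 hkZ
  have e3 : 0 ≤ (h : ℤ) * glueProd b 0 1 := by positivity
  have e4 : 0 ≤ (k : ℤ) * glueProd c 0 1 := by positivity
  have dpos : 0 < d := by
    by_contra hcon
    nlinarith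
  lift d to ℕ using dpos.le
  have dpos' : 0 < d := by exact_mod_cast dpos
  have hhkR : (0 : ℝ) < h * k := by exact_mod_cast hhk
  have up : (h : ℤ) * k * d ≤ q := by linarith
  have lo : (q : ℤ) < h * k * d + 2 * (h * k) := by linarith
  have upR : (h : ℝ) * k * d ≤ q := by exact_mod_cast up
  have loR : (q : ℝ) < h * k * d + 2 * (h * k) := by exact_mod_cast lo
  refine ⟨d, dpos', ?_, ?_, ?_⟩
  · rw [sub_lt_iff_lt_add, div_lt_iff₀ hhkR]; linarith
  · rw [le_div_iff₀ hhkR]; linarith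
  have hlist : (b.map (Nat.cast) ++ [(d : ℝ)] ++ (c.map (Nat.cast)).reverse) =
      (b ++ [d] ++ c.reverse).map Nat.cast := by simp
  have hpos : ∀ x ∈ b ++ [d] ++ c.reverse, 0 < x := by
    intro x hx
    simp only [List.mem_append, List.mem_singleton, List.mem_reverse] at hx
    rcases hx with (hx | rfl) | hx
    · exact hbpos x hx
    · exact dpos'
    · exact hcpos x hx
  rw [hlist, cfEval_glue _ hpos]
  have hM : glueProd (b ++ [d] ++ c.reverse) =
      glueProd b * glueMat d * (glueProd c).transpose := by
    rw [glueProd_append, glueProd_append, glueProd_reverse, glueProd_cons, glueProd_nil, mul_one]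
  have hden : glueProd (b ++ [d] ++ c.reverse) 0 0 = q := by
    rw [hM]
    simp [Matrix.mul_apply, Fin.sum_univ_two, glueMat, b1, c1]
    linear_combination -hd
  have hnum : glueProd (b ++ [d] ++ c.reverse) 1 0 =
      glueProd b 1 0 * (d * h + glueProd c 0 1) + glueProd b 1 1 * h := by
    rw [hM]
    simp [Matrix.mul_apply, Fin.sum_univ_two, glueMat, b1, c1]
    ring
  have hn0 := (glue_pos _ hpos).2.1
  have hkn : k * glueProd (b ++ [d] ++ c.reverse) 1 0 = glueProd b 1 0 * q + h := by
    rw [hnum]; linear_combination (h : ℤ) * b7 - glueProd b 1 0 * hd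
  rw [hden]
  generalize glueProd (b ++ [d] ++ c.reverse) 1 0 = n at *
  have hnq : n < q := by
    have : (h : ℤ) < q := by nlinarith
    nlinarith
  obtain ⟨t, ht⟩ := hikq.symm.dvd
  have hqR : (0 : ℝ) < q := by exact_mod_cast hq
  have hdq : (q : ℤ) ∣ h * ikq - n :=
    ⟨n * t - glueProd b 1 0 * ikq, by linear_combination n * ht - ikq * hkn⟩
  obtain ⟨z, hz⟩ := hdq
  rw [Int.fract_eq_iff]
  have hn0R : (0 : ℝ) ≤ n := by exact_mod_cast hn0
  have hnqR : (n : ℝ) < q := by exact_mod_cast hnq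
  have hzR : (h : ℝ) * ikq - n = q * z := by exact_mod_cast hz
  push_cast
  refine ⟨by positivity, (div_lt_one hqR).2 hnqR, z, ?_⟩
  rw [← sub_div, hzR]
  field_simp
end

section
/- Let h, k, q be positive integers with gcd(h,k) = gcd(h,q) = gcd(k,q) = 1 and 0 < h < q. Then {h·inv_q(k)/q} = {−h·inv_k(q)/k} + h/(qk). -/
open Real

/-- Equation (6.1) of the paper: `{h k̄ / q} = {-h q̄ / k} + h/(qk)`. -/
theorem fract_inverse_relation (h k q : ℕ) (hh : 0 < h) (hk : 0 < k) (hq : 0 < q)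
    (chk : Nat.Coprime h k) (chq : Nat.Coprime h q) (ckq : Nat.Coprime k q)
    (hlt : h < q)
    (kinv qinv : ℤ)
    (hkinv : (k : ℤ) * kinv ≡ 1 [ZMOD (q : ℤ)])
    (hqinv : (q : ℤ) * qinv ≡ 1 [ZMOD (k : ℤ)]) :
    Int.fract (((h : ℝ) * kinv)/q) = Int.fract ((-(h : ℝ) * qinv)/k) + (h : ℝ)/(q * k) := by
  have hd1 : (q : ℤ) ∣ (k : ℤ) * kinv + q * qinv - 1 := by
    have h1 := hkinv.symm.dvd
    have h2 : (q : ℤ) ∣ (k * kinv - 1) + q * qinv := dvd_add h1 (dvd_mul_right _ _)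
    convert h2 using 1
    ring
  have hd2 : (k : ℤ) ∣ (k : ℤ) * kinv + q * qinv - 1 := by
    have h1 := hqinv.symm.dvd
    have h2 : (k : ℤ) ∣ (q * qinv - 1) + k * kinv := dvd_add h1 (dvd_mul_right _ _)
    convert h2 using 1
    ring
  have hcop : IsCoprime (k : ℤ) (q : ℤ) := Nat.isCoprime_iff_coprime.mpr ckq
  obtain ⟨m, hm⟩ := hcop.mul_dvd hd2 hd1
  have hmR : (k : ℝ) * kinv + q * qinv - 1 = k * q * m := by exact_mod_cast hm
  have hkR : (0 : ℝ) < k := by exact_mod_cast hk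
  have hqR : (0 : ℝ) < q := by exact_mod_cast hq
  have hhR : (h : ℝ) < q := by exact_mod_cast hlt
  set x : ℝ := (-(h : ℝ) * qinv) / k with hx
  have hxk : Int.fract x * k = ((-(h : ℤ) * qinv - ⌊x⌋ * k : ℤ) : ℝ) := by
    rw [← Int.self_sub_floor, sub_mul, hx, div_mul_cancel₀ _ hkR.ne']
    push_cast
    ring
  have hlt1 : Int.fract x * k < k := by
    nlinarith [Int.fract_lt_one x]
  have hle : Int.fract x * k ≤ k - 1 := by
    rw [hxk] at hlt1 ⊢
    have h3 : (-(h : ℤ) * qinv - ⌊x⌋ * k : ℤ) < (k : ℤ) := by exact_mod_cast hlt1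
    have h4 : (-(h : ℤ) * qinv - ⌊x⌋ * k : ℤ) ≤ (k : ℤ) - 1 := by omega
    exact_mod_cast h4
  rw [Int.fract_eq_iff]
  refine ⟨add_nonneg (Int.fract_nonneg _) (by positivity), ?_, h * m + ⌊x⌋, ?_⟩
  · have h5 : (h : ℝ) / (q * k) * k < 1 := by
      have : (h : ℝ) / (q * k) * k = h / q := by field_simp
      rw [this, div_lt_one hqR]
      exact hhR
    by_contra hc
    push Not at hc
    nlinarith
  · rw [← Int.self_sub_floor]
    push_cast
    rw [hx]
    field_simp
    linear_combination (h : ℝ) * hmR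
end

section
/- Let s ∈ ℂ, let z ∈ ℂ with Im(z) > 0, and let c > 1/2 + |Re(s)|. Then S_0(s, z) = (1/2π)·∫_ℝ Γ(w)·ζ(1/2+w+s)·ζ(1/2+w−s)·(−2πiz)^{−w} dt, where w = c + it and the integral converges absolutely. -/
open Complex Real MeasureTheory

/-- `S_0(s,z) = ∑_{n≥1} e^{2πinz} σ_{2s}(n) n^{-(s+1/2)}`. -/
noncomputable def Sfun0 (s z : ℂ) : ℂ :=
  ∑' n : ℕ, Complex.exp (2 * π * Complex.I * n * z) *
    (∑ d ∈ n.divisors, (d:ℂ)^(2*s)) * (n:ℂ) ^ (-(s + 1/2))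

lemma aux_int {b r : ℝ} (hb : 0 < b) (hr : 0 < r) :
    IntegrableOn (fun t : ℝ => t ^ (b - 1) * rexp (-(r * t))) (Set.Ioi 0) := by
  have := integrableOn_rpow_mul_exp_neg_mul_rpow (s := b - 1) (p := 1) (b := r)
    (by linarith) one_pos hr
  simpa using this

lemma aux_meas (w a : ℂ) :
    AEStronglyMeasurable (fun t : ℝ => (t : ℂ) ^ (w - 1) * cexp (-(a * t)))
      (volume.restrict (Set.Ioi 0)) := by
  apply ContinuousOn.aestronglyMeasurable _ measurableSet_Ioi
  intro t ht
  apply ContinuousAt.continuousWithinAt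
  apply ContinuousAt.mul
  · exact (Complex.continuousAt_ofReal_cpow_const _ _ (Or.inr (ne_of_gt ht)))
  · fun_prop

lemma aux_norm (w a : ℂ) {t : ℝ} (ht : 0 < t) :
    ‖(t : ℂ) ^ (w - 1) * cexp (-(a * t))‖ = t ^ (w.re - 1) * rexp (-(a.re * t)) := by
  rw [norm_mul, Complex.norm_cpow_eq_rpow_re_of_pos ht, Complex.norm_exp]
  simp

lemma aux_intC {w a : ℂ} (hw : 0 < w.re) (ha : 0 < a.re) :
    IntegrableOn (fun t : ℝ => (t : ℂ) ^ (w - 1) * cexp (-(a * t))) (Set.Ioi 0) := by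
  refine Integrable.mono' (aux_int hw ha) (aux_meas w a) ?_
  filter_upwards [ae_restrict_mem measurableSet_Ioi] with t ht
  exact (aux_norm w a ht).le

lemma aux_diff {w a : ℂ} (hw : 0 < w.re) (ha : 0 < a.re) :
    DifferentiableAt ℂ
      (fun a : ℂ => ∫ t : ℝ in Set.Ioi 0, (t : ℂ) ^ (w - 1) * cexp (-(a * t))) a := by
  have hs : {x : ℂ | a.re / 2 < x.re} ∈ nhds a :=
    (isOpen_lt continuous_const Complex.continuous_re).mem_nhds (by simp; linarith)
  refine (hasDerivAt_integral_of_dominated_loc_of_deriv_le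
    (F' := fun x t => (t : ℂ) ^ (w - 1) * (cexp (-(x * t)) * (-(t : ℂ))))
    (bound := fun t => t ^ (w.re + 1 - 1) * rexp (-(a.re / 2 * t))) hs
    (Filter.Eventually.of_forall fun x => aux_meas w x) (aux_intC hw ha) ?_ ?_
    (aux_int (by linarith) (by linarith)) ?_).2.differentiableAt
  · have h0 : AEStronglyMeasurable (fun t : ℝ => -(t : ℂ)) (volume.restrict (Set.Ioi 0)) := by
      apply Continuous.aestronglyMeasurable
      fun_prop
    have := (aux_meas w a).mul h0
    refine this.congr (Filter.Eventually.of_forall fun t => ?_)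
    simp only [Pi.mul_apply, mul_assoc]
  · filter_upwards [ae_restrict_mem measurableSet_Ioi] with t ht x hx
    have ht' : (0 : ℝ) < t := ht
    rw [← mul_assoc, norm_mul, aux_norm w x ht', norm_neg, Complex.norm_real, Real.norm_of_nonneg ht'.le]
    have : t ^ (w.re + 1 - 1) = t ^ (w.re - 1) * t := by
      rw [← Real.rpow_add_one ht'.ne']; congr 1; ring
    rw [this]
    have hx' : a.re / 2 ≤ x.re := le_of_lt hx
    have : rexp (-(x.re * t)) ≤ rexp (-(a.re / 2 * t)) := by
      gcongr
    have h0 : 0 ≤ t ^ (w.re - 1) * t := by positivity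
    nlinarith
  · filter_upwards with t x hx
    have h1 : HasDerivAt (fun x : ℂ => -(x * (t : ℂ))) (-(t : ℂ)) x := by
      have := ((hasDerivAt_id x).mul_const (t : ℂ)).fun_neg
      simpa using this
    exact h1.cexp.const_mul _

lemma aux_gamma {w a : ℂ} (hw : 0 < w.re) (ha : 0 < a.re) :
    ∫ t : ℝ in Set.Ioi 0, (t : ℂ) ^ (w - 1) * cexp (-(a * t)) =
      Complex.Gamma w * a ^ (-w) := by
  have ho : IsOpen {x : ℂ | 0 < x.re} := isOpen_lt continuous_const Complex.continuous_re
  have h1 : AnalyticOnNhd ℂ (fun a : ℂ => ∫ t : ℝ in Set.Ioi 0, (t : ℂ) ^ (w - 1) * cexp (-(a * t)))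
      {x : ℂ | 0 < x.re} :=
    DifferentiableOn.analyticOnNhd (fun x hx => (aux_diff hw hx).differentiableWithinAt) ho
  have h2 : AnalyticOnNhd ℂ (fun a : ℂ => Complex.Gamma w * a ^ (-w)) {x : ℂ | 0 < x.re} := by
    apply DifferentiableOn.analyticOnNhd _ ho
    intro x hx
    apply DifferentiableAt.differentiableWithinAt
    apply DifferentiableAt.const_mul
    exact differentiableAt_id.cpow_const (Or.inl hx)
  have hpc : IsPreconnected {x : ℂ | 0 < x.re} :=
    (convex_halfSpace_re_gt 0).isPreconnected
  have hfr : ∃ᶠ x in nhdsWithin (1 : ℂ) {1}ᶜ,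
      (∫ t : ℝ in Set.Ioi 0, (t : ℂ) ^ (w - 1) * cexp (-(x * t))) = Complex.Gamma w * x ^ (-w) := by
    have ht : Filter.Tendsto (fun r : ℝ => (r : ℂ)) (nhdsWithin 1 {1}ᶜ)
        (nhdsWithin (1 : ℂ) {1}ᶜ) := by
      apply tendsto_nhdsWithin_of_tendsto_nhds_of_eventually_within
      · have : ContinuousAt (fun r : ℝ => (r : ℂ)) 1 := by fun_prop
        have := this.tendsto
        simp only [Complex.ofReal_one] at this
        exact this.mono_left nhdsWithin_le_nhds
      · filter_upwards [self_mem_nhdsWithin] with r hr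
        simpa using hr
    refine ht.frequently (Filter.Eventually.frequently ?_)
    have : Set.Ioi (0 : ℝ) ∈ nhdsWithin (1 : ℝ) {1}ᶜ :=
      nhdsWithin_le_nhds (Ioi_mem_nhds one_pos)
    filter_upwards [this] with r hr
    have hr' : (0 : ℝ) < r := hr
    rw [Complex.integral_cpow_mul_exp_neg_mul_Ioi hw hr', mul_comm, one_div,
      Complex.inv_cpow _ _ (by rw [Complex.arg_ofReal_of_nonneg hr'.le]; exact pi_pos.ne),
      Complex.cpow_neg]
  exact h1.eqOn_of_preconnected_of_frequently_eq h2 hpc (by simp : (1 : ℂ) ∈ _) hfr ha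

lemma aux_bound {c φ : ℝ} (hc : 0 < c) (hφ : |φ| < π / 2) :
    ∃ K : ℝ, ∀ t : ℝ, ‖Complex.Gamma (c + t * I)‖ ≤ K * rexp (-(φ * t)) := by
  refine ⟨∫ t : ℝ in Set.Ioi 0, t ^ (c - 1) * rexp (-(Real.cos φ * t)), fun y => ?_⟩
  have hφ' := abs_lt.1 hφ
  have hcos : 0 < Real.cos φ := Real.cos_pos_of_mem_Ioo ⟨by linarith, by linarith⟩
  set a : ℂ := cexp (φ * I) with ha
  have hare : a.re = Real.cos φ := by rw [ha, Complex.exp_ofReal_mul_I_re]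
  have h := aux_gamma (w := c + y * I) (a := a) (by simpa using hc) (by rw [hare]; exact hcos)
  have hle : ‖Complex.Gamma (c + y * I) * a ^ (-(c + y * I))‖ ≤
      ∫ t : ℝ in Set.Ioi 0, t ^ (c - 1) * rexp (-(Real.cos φ * t)) := by
    rw [← h]
    refine (norm_integral_le_integral_norm _).trans (le_of_eq ?_)
    refine setIntegral_congr_fun measurableSet_Ioi fun t ht => ?_
    have := aux_norm (c + y * I) a ht
    simp only [this, hare]
    simp
  have harg : Complex.arg a = φ := by
    rw [ha, Complex.arg_exp_mul_I, toIocMod_eq_self]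
    constructor <;> [linarith [pi_pos]; linarith [pi_pos]]
  have hn : ‖a ^ (-((c : ℂ) + y * I))‖ = rexp (φ * y) := by
    rw [Complex.norm_cpow_of_ne_zero (by rw [ha]; exact Complex.exp_ne_zero _), harg, ha,
      Complex.norm_exp_ofReal_mul_I]
    simp [Real.exp_neg]
  rw [norm_mul, hn] at hle
  rw [Real.exp_neg, ← div_eq_mul_inv, le_div_iff₀ (Real.exp_pos _)]
  exact hle

lemma aux_exp_int {b : ℝ} (hb : 0 < b) : Integrable (fun t : ℝ => rexp (-(b * |t|))) := by
  rw [← integrableOn_univ, ← Set.Iic_union_Ioi (a := (0 : ℝ))]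
  apply IntegrableOn.union
  · refine (integrableOn_exp_mul_Iic hb 0).congr_fun (fun t ht => ?_) measurableSet_Iic
    have ht' : t ≤ 0 := ht
    simp [abs_of_nonpos ht']
  · refine (integrableOn_exp_mul_Ioi (neg_lt_zero.2 hb) 0).congr_fun (fun t ht => ?_) measurableSet_Ioi
    have ht' : 0 < t := ht
    simp [abs_of_pos ht']

lemma aux_line_cont {c : ℝ} (hc : 0 < c) {a : ℂ} (ha : a ≠ 0) :
    Continuous (fun t : ℝ => Complex.Gamma (c + t * I) * a ^ (-((c : ℂ) + t * I))) := by
  apply Continuous.mul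
  · rw [continuous_iff_continuousAt]
    intro t
    have : ContinuousAt Complex.Gamma ((c : ℂ) + t * I) := by
      apply Complex.continuousAt_Gamma
      intro m hm
      have := congrArg Complex.re hm
      simp at this
      have : (0 : ℝ) ≤ m := m.cast_nonneg
      linarith
    exact ContinuousAt.comp (f := fun t : ℝ => (c : ℂ) + t * I) this (by fun_prop)
  · exact Continuous.const_cpow (by fun_prop) (Or.inl ha)

lemma aux_vert {c : ℝ} (hc : 0 < c) {a : ℂ} (ha : 0 < a.re) :
    Integrable (fun t : ℝ => Complex.Gamma (c + t * I) * a ^ (-((c : ℂ) + t * I))) := by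
  have ha0 : a ≠ 0 := by rintro rfl; simp at ha
  have harg : |a.arg| < π / 2 := Complex.abs_arg_lt_pi_div_two_iff.2 (Or.inl ha)
  obtain ⟨φ, h1, h2⟩ := exists_between harg
  have hφ : |φ| < π / 2 := by rwa [abs_of_pos ((abs_nonneg _).trans_lt h1)]
  obtain ⟨K1, hK1⟩ := aux_bound hc hφ
  obtain ⟨K2, hK2⟩ := aux_bound hc (φ := -φ) (by rwa [abs_neg])
  have hb : 0 < φ - |a.arg| := by linarith
  refine Integrable.mono' ((aux_exp_int hb).const_mul (max K1 K2 * ‖a‖ ^ (-c)))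
    (aux_line_cont hc ha0).aestronglyMeasurable (Filter.Eventually.of_forall fun t => ?_)
  have hG : ‖Complex.Gamma (c + t * I)‖ ≤ max K1 K2 * rexp (-(φ * |t|)) := by
    rcases le_total 0 t with h | h
    · rw [abs_of_nonneg h]
      refine (hK1 t).trans ?_
      gcongr
      exact le_max_left _ _
    · rw [abs_of_nonpos h]
      refine (hK2 t).trans ?_
      rw [neg_mul, mul_neg]
      gcongr
      exact le_max_right _ _
  have hA : ‖a ^ (-((c : ℂ) + t * I))‖ ≤ ‖a‖ ^ (-c) * rexp (|a.arg| * |t|) := by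
    rw [Complex.norm_cpow_of_ne_zero ha0]
    simp only [Complex.neg_re, Complex.add_re, Complex.ofReal_re, Complex.mul_re, Complex.I_re,
      mul_zero, Complex.ofReal_im, Complex.I_im, mul_one, sub_self, add_zero, Complex.neg_im,
      Complex.add_im, Complex.mul_im, zero_add, mul_neg, Real.exp_neg, div_inv_eq_mul]
    refine mul_le_mul_of_nonneg_left (Real.exp_le_exp.2 ?_) (by positivity)
    rw [← abs_mul]
    exact le_abs_self _
  rw [norm_mul]
  calc _ ≤ (max K1 K2 * rexp (-(φ * |t|))) * (‖a‖ ^ (-c) * rexp (|a.arg| * |t|)) :=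
        mul_le_mul hG hA (norm_nonneg _) ((norm_nonneg _).trans hG)
    _ = max K1 K2 * ‖a‖ ^ (-c) * (rexp (-(φ * |t|)) * rexp (|a.arg| * |t|)) := by ring
    _ = _ := by rw [← Real.exp_add]; congr 2; ring

lemma aux_inv {c : ℝ} (hc : 0 < c) {a : ℂ} (ha : 0 < a.re) :
    cexp (-a) = (1 / (2 * π)) *
      ∫ t : ℝ, Complex.Gamma (c + t * I) * a ^ (-((c : ℂ) + t * I)) := by
  have hm : ∀ y : ℝ, mellin (fun t : ℝ => cexp (-(a * t))) ((c : ℂ) + y * I) =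
      Complex.Gamma (c + y * I) * a ^ (-((c : ℂ) + y * I)) := by
    intro y
    rw [← aux_gamma (by simpa using hc) ha]
    rfl
  have h := mellinInv_mellin_eq c (fun t : ℝ => cexp (-(a * t))) (x := 1) one_pos
    (aux_intC (w := c) (by simpa using hc) ha)
    (by
      unfold Complex.VerticalIntegrable
      simp only [hm]
      exact aux_vert hc ha)
    (by fun_prop)
  unfold mellinInv at h
  simp only [hm, Complex.ofReal_one, Complex.one_cpow, one_smul, mul_one] at h
  rw [← h, Complex.real_smul]
  push_cast
  rfl

/-! Dirichlet series part. -/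

lemma aux_term (u w : ℂ) (n : ℕ) :
    LSeries.term (fun n : ℕ => (n : ℂ) ^ u) w n = LSeries.term 1 (w - u) n := by
  rcases eq_or_ne n 0 with rfl | hn
  · simp
  have : (n : ℂ) ≠ 0 := by exact_mod_cast hn
  rw [LSeries.term_of_ne_zero hn, LSeries.term_of_ne_zero hn, Complex.cpow_sub _ _ this]
  simp

lemma aux_sum {u w : ℂ} (h : 1 < (w - u).re) :
    LSeriesSummable (fun n : ℕ => (n : ℂ) ^ u) w ∧
      LSeries (fun n : ℕ => (n : ℂ) ^ u) w = riemannZeta (w - u) := by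
  constructor
  · have := LSeriesSummable_one_iff.2 h
    unfold LSeriesSummable at this ⊢
    rwa [funext (aux_term u w)]
  · rw [← LSeries_one_eq_riemannZeta h]
    unfold LSeries
    simp only [aux_term]

/-- coefficients -/
noncomputable def auxCoef (s : ℂ) (n : ℕ) : ℂ :=
  (∑ d ∈ n.divisors, (d:ℂ)^(2*s)) * (n:ℂ) ^ (-(s + 1/2))

lemma aux_coef (s : ℂ) : auxCoef s = LSeries.convolution
    (fun n : ℕ => (n : ℂ) ^ (s - 1/2)) (fun n : ℕ => (n : ℂ) ^ (-s - 1/2)) := by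
  ext n
  rw [LSeries.convolution_def, auxCoef]
  simp only
  rw [Nat.sum_divisorsAntidiagonal (fun a b : ℕ => (a : ℂ) ^ (s - 1/2) * (b : ℂ) ^ (-s - 1/2)),
    Finset.sum_mul]
  refine Finset.sum_congr rfl fun d hd => ?_
  obtain ⟨⟨e, rfl⟩, hn⟩ := Nat.mem_divisors.1 hd
  have hd0 : d ≠ 0 := by rintro rfl; simp at hn
  have hdc : (d : ℂ) ≠ 0 := by exact_mod_cast hd0
  rw [Nat.mul_div_cancel_left _ (Nat.pos_of_ne_zero hd0), Nat.cast_mul,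
    Complex.natCast_mul_natCast_cpow, ← mul_assoc, ← Complex.cpow_add _ _ hdc]
  congr 2 <;> ring

lemma aux_L {s w : ℂ} (h : 1/2 + |s.re| < w.re) :
    LSeriesSummable (auxCoef s) w ∧ LSeries (auxCoef s) w =
      riemannZeta (1/2 + w + s) * riemannZeta (1/2 + w - s) := by
  have h1 := abs_le.1 (le_refl |s.re|)
  obtain ⟨a1, a2⟩ := aux_sum (u := s - 1/2) (w := w) (by simp; linarith)
  obtain ⟨b1, b2⟩ := aux_sum (u := -s - 1/2) (w := w) (by simp; linarith)
  rw [aux_coef]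
  refine ⟨a1.convolution b1, ?_⟩
  rw [LSeries_convolution' a1 b1, a2, b2, mul_comm]
  congr 2 <;> ring

/-- The Mellin-type integral representation of `S_0(s,z)` on a vertical line
`Re w = c` with `c > 1/2 + |Re s|`. -/
theorem S0_integral_representation (s z : ℂ) (hz : 0 < z.im) (c : ℝ)
    (hc : 1/2 + |s.re| < c) :
    Integrable (fun t : ℝ =>
      Complex.Gamma ((c : ℂ) + t * Complex.I) *
        riemannZeta (1/2 + ((c : ℂ) + t * Complex.I) + s) *
        riemannZeta (1/2 + ((c : ℂ) + t * Complex.I) - s) *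
        (-(2 * π * Complex.I * z)) ^ (-((c : ℂ) + t * Complex.I))) ∧
    Sfun0 s z = (1/(2*π)) *
      ∫ t : ℝ,
        Complex.Gamma ((c : ℂ) + t * Complex.I) *
          riemannZeta (1/2 + ((c : ℂ) + t * Complex.I) + s) *
          riemannZeta (1/2 + ((c : ℂ) + t * Complex.I) - s) *
          (-(2 * π * Complex.I * z)) ^ (-((c : ℂ) + t * Complex.I)) := by
  have hc0 : 0 < c := by linarith [abs_nonneg s.re]
  set A : ℂ := -(2 * π * Complex.I * z) with hA
  have hAre : 0 < A.re := by
    have : A.re = 2 * π * z.im := by simp [hA]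
    rw [this]
    have := pi_pos
    positivity
  have hL := fun t : ℝ => aux_L (s := s) (w := (c : ℂ) + t * Complex.I) (by simpa using hc)
  have hG := aux_vert hc0 hAre
  have hsum : Summable fun n => ‖LSeries.term (auxCoef s) (c : ℂ) n‖ := by
    have := (hL 0).1
    simp only [Complex.ofReal_zero, zero_mul, add_zero] at this
    exact Summable.norm this
  have hnorm : ∀ (t : ℝ) (n : ℕ), ‖LSeries.term (auxCoef s) ((c : ℂ) + t * Complex.I) n‖ =
      ‖LSeries.term (auxCoef s) (c : ℂ) n‖ := by
    intro t n
    simp [LSeries.norm_term_eq]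
  have hfun : ∀ t : ℝ, Complex.Gamma ((c : ℂ) + t * Complex.I) *
        riemannZeta (1/2 + ((c : ℂ) + t * Complex.I) + s) *
        riemannZeta (1/2 + ((c : ℂ) + t * Complex.I) - s) *
        A ^ (-((c : ℂ) + t * Complex.I)) =
      LSeries (auxCoef s) ((c : ℂ) + t * Complex.I) *
        (Complex.Gamma (c + t * I) * A ^ (-((c : ℂ) + t * I))) := by
    intro t
    rw [(hL t).2]
    ring
  simp only [hfun]
  have hterm_cont : ∀ n : ℕ, Continuous
      fun t : ℝ => LSeries.term (auxCoef s) ((c : ℂ) + t * Complex.I) n := by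
    intro n
    rcases eq_or_ne n 0 with rfl | hn
    · simp only [LSeries.term_zero]
      exact continuous_const
    have hn' : (n : ℂ) ≠ 0 := by exact_mod_cast hn
    simp only [LSeries.term_of_ne_zero hn]
    refine continuous_const.div (Continuous.const_cpow (by fun_prop) (Or.inl hn')) fun t => ?_
    simp [Complex.cpow_eq_zero_iff, hn]
  have hLcont : Continuous fun t : ℝ => LSeries (auxCoef s) ((c : ℂ) + t * Complex.I) :=
    continuous_tsum hterm_cont hsum fun n t => (hnorm t n).le
  refine ⟨?_, ?_⟩
  · refine hG.bdd_mul (c := ∑' n, ‖LSeries.term (auxCoef s) (c : ℂ) n‖)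
      hLcont.aestronglyMeasurable (Filter.Eventually.of_forall fun t => ?_)
    exact tsum_of_norm_bounded hsum.hasSum fun n => (hnorm t n).le
  · have hF := hasSum_integral_of_summable_integral_norm (μ := (volume : Measure ℝ))
      (F := fun (n : ℕ) (t : ℝ) => LSeries.term (auxCoef s) ((c : ℂ) + t * Complex.I) n *
        (Complex.Gamma (c + t * I) * A ^ (-((c : ℂ) + t * I))))
      (fun n => hG.bdd_mul (c := ‖LSeries.term (auxCoef s) (c : ℂ) n‖)
        (hterm_cont n).aestronglyMeasurable
        (Filter.Eventually.of_forall fun t => (hnorm t n).le))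
      (by
        simp only [norm_mul (LSeries.term _ _ _), hnorm]
        simp only [integral_const_mul]
        exact hsum.mul_right _)
    have hF2 := hF.tsum_eq
    simp only [tsum_mul_right] at hF2
    have hdef : ∀ t : ℝ, ∑' n, LSeries.term (auxCoef s) ((c : ℂ) + t * Complex.I) n =
      LSeries (auxCoef s) ((c : ℂ) + t * Complex.I) := fun t => rfl
    simp only [hdef] at hF2
    rw [← hF2, ← tsum_mul_left, Sfun0]
    refine tsum_congr fun n => ?_
    rcases eq_or_ne n 0 with rfl | hn
    · simp
    have hnpos : (0 : ℝ) < n := by exact_mod_cast Nat.pos_of_ne_zero hn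
    have hn' : (n : ℂ) ≠ 0 := by exact_mod_cast hn
    have hAn : 0 < (((n : ℝ) : ℂ) * A).re := by
      rw [Complex.re_ofReal_mul]
      positivity
    have hinv := aux_inv hc0 hAn
    have hA0 : A ≠ 0 := by
      intro h
      rw [h] at hAre
      simp at hAre
    have hpow : ∀ t : ℝ, (((n : ℝ) : ℂ) * A) ^ (-((c : ℂ) + t * I)) =
        (n : ℂ) ^ (-((c : ℂ) + t * I)) * A ^ (-((c : ℂ) + t * I)) := by
      intro t
      rw [Complex.cpow_def_of_ne_zero (by simp [hn, hA0]), Complex.log_ofReal_mul hnpos hA0,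
        add_mul, Complex.exp_add, Complex.cpow_def_of_ne_zero hA0,
        Complex.cpow_def_of_ne_zero hn', Complex.ofReal_log hnpos.le, Complex.ofReal_natCast]
    have he : Complex.exp (2 * π * Complex.I * n * z) = cexp (-(((n : ℝ) : ℂ) * A)) := by
      congr 1
      rw [hA, Complex.ofReal_natCast]
      ring
    rw [he, hinv, mul_assoc, mul_assoc]
    change _ * (_ * auxCoef s n) = _
    rw [← integral_mul_const]
    congr 2
    ext t
    rw [hpow, LSeries.term_of_ne_zero hn, Complex.cpow_neg (n : ℂ)]
    ring
end
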